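/- arXiv:1205.4692 — 2 statements merged into one kernel-verified Lean document; each statement's English description precedes it below -/
import Mathlib

section
/- Under assumptions G3(1), G4(β) and G5 on g, and if the kernel K satisfies K1 and K2(α) for some α ≥ β, then for every h > 0 and Δ > 0 the bias b(x₀) = E[ĝ_h(x₀)] − g(x₀) of the kernel estimator satisfies |b(x₀)|² ≤ c₁ h^{2β} + c₁′ Δ², where c₁ = 2 (L/⌊β⌋! · ∫|K(v)| |v|^β dv)² and c₁′ = 2 (2‖g′‖_∞ ‖g‖₁ ‖K‖₁)². -/
open MeasureTheory Real Filter Finset Asymptotics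
open scoped Topology

noncomputable section

namespace LevyAdapt

/-- Fourier transform `g*(u) = ∫ e^{iux} g(x) dx`. -/
def ft (g : ℝ → ℝ) (u : ℝ) : ℂ :=
  ∫ x : ℝ, Complex.exp (Complex.I * u * x) * (g x : ℂ)

/-- Scaled kernel `K_h(x) = h⁻¹ K(x/h)`. -/
def sk (K : ℝ → ℝ) (h x : ℝ) : ℝ := h⁻¹ * K (x / h)

/-- L¹ norm. -/
def nl1 (f : ℝ → ℝ) : ℝ := ∫ x : ℝ, |f x|

/-- Squared L² norm. -/
def nl2sq (f : ℝ → ℝ) : ℝ := ∫ x : ℝ, (f x) ^ 2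

/-- Sup norm. -/
def nsup (f : ℝ → ℝ) : ℝ := ⨆ x : ℝ, |f x|

/-- L¹ norm of a complex-valued function on ℝ. -/
def cnl1 (f : ℝ → ℂ) : ℝ := ∫ u : ℝ, ‖f u‖

/-- Squared L² norm of a complex-valued function on ℝ. -/
def cnl2sq (f : ℝ → ℂ) : ℝ := ∫ u : ℝ, ‖f u‖ ^ 2

/-- The largest integer strictly smaller than `β` (for `β > 0`). -/
def hfloor (β : ℝ) : ℕ := ⌈β⌉₊ - 1

/-- The Hölder class `H(β, L)`: with `l = hfloor β`, the `l`-th derivative exists and is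
`(β - l)`-Hölder with constant `L`. -/
def Holder (β L : ℝ) (f : ℝ → ℝ) : Prop :=
  (∀ m : ℕ, m < hfloor β → Differentiable ℝ (iteratedDeriv m f)) ∧
  ∀ x y : ℝ,
    |iteratedDeriv (hfloor β) f x - iteratedDeriv (hfloor β) f y| ≤
      L * |x - y| ^ (β - (hfloor β : ℝ))

/-- Assumption G1: `g ∈ L²`. -/
def G1 (g : ℝ → ℝ) : Prop := Integrable (fun x : ℝ => (g x) ^ 2)

/-- Assumption G2: `g*` is differentiable a.e. and its derivative is integrable. -/
def G2 (g : ℝ → ℝ) : Prop :=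
  (∀ᵐ u : ℝ, DifferentiableAt ℝ (ft g) u) ∧ Integrable (deriv (ft g))

/-- Assumption G3(p): `∫ |x|^(p-1) |g(x)| dx < ∞`. -/
def G3 (p : ℕ) (g : ℝ → ℝ) : Prop :=
  Integrable (fun x : ℝ => |x| ^ (p - 1) * |g x|)

/-- Assumption G5: `g'` exists and is uniformly bounded. -/
def G5 (g : ℝ → ℝ) : Prop :=
  Differentiable ℝ g ∧ BddAbove (Set.range fun x : ℝ => |deriv g x|)

/-- Assumption K1: `K ∈ L¹ ∩ L² ∩ L^∞` and `K* ∈ L¹`. -/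
def K1 (K : ℝ → ℝ) : Prop :=
  Measurable K ∧ Integrable K ∧ Integrable (fun x : ℝ => (K x) ^ 2) ∧
    BddAbove (Set.range fun x : ℝ => |K x|) ∧ Integrable (ft K)

/-- `K` is a kernel of order `m`. -/
def KernelOrder (m : ℕ) (K : ℝ → ℝ) : Prop :=
  (∀ j : ℕ, j ≤ m → Integrable (fun t : ℝ => t ^ j * K t)) ∧
  (∫ t : ℝ, K t) = 1 ∧
  ∀ j : ℕ, 1 ≤ j → j ≤ m → (∫ t : ℝ, t ^ j * K t) = 0

/-- Assumption K2(α): `K` is a kernel of order `hfloor α` and `∫ |x|^α |K(x)| dx < ∞`. -/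
def K2 (α : ℝ) (K : ℝ → ℝ) : Prop :=
  KernelOrder (hfloor α) K ∧ Integrable (fun x : ℝ => |x| ^ α * |K x|)

/-- `P` is the law of an increment of length `Δ` of the pure-jump Lévy process with Lévy
density `N`, characterized through its characteristic function. -/
def IncrementLawN (P : Measure ℝ) (Δ : ℝ) (N : ℝ → ℝ) : Prop :=
  ∀ u : ℝ,
    (∫ x : ℝ, Complex.exp (Complex.I * u * x) ∂P) =
      Complex.exp ((Δ : ℂ) * ∫ x : ℝ, (Complex.exp (Complex.I * u * x) - 1) * (N x : ℂ))

/-- Increment law expressed through `g(x) = x N(x)`, i.e. `N(x) = g(x)/x`. -/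
def IncrementLaw (P : Measure ℝ) (Δ : ℝ) (g : ℝ → ℝ) : Prop :=
  IncrementLawN P Δ fun x => g x / x

/-- The `n`-sample (i.i.d.) product measure. -/
def pm (P : Measure ℝ) [SigmaFinite P] (n : ℕ) : Measure (Fin n → ℝ) :=
  Measure.pi fun _ => P

/-- The kernel estimator `ĝ_h(x) = (nΔ)⁻¹ ∑ₖ Zₖ K_h(x - Zₖ)`. -/
def ghat (K : ℝ → ℝ) (h Δ : ℝ) {n : ℕ} (z : Fin n → ℝ) (x : ℝ) : ℝ :=
  ((n : ℝ) * Δ)⁻¹ * ∑ k : Fin n, z k * sk K h (x - z k)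

/-- The auxiliary estimator `ĝ_{h,h'}(x)` using the convolved kernel `K_{h'} ⋆ K_h`. -/
def ghat2 (K : ℝ → ℝ) (h h' Δ : ℝ) {n : ℕ} (z : Fin n → ℝ) (x : ℝ) : ℝ :=
  ((n : ℝ) * Δ)⁻¹ *
    ∑ k : Fin n, z k * ∫ y : ℝ, sk K h' y * sk K h (x - z k - y)

/-- Mean `E[ĝ_h(x)]` of the kernel estimator. -/
def mghat (K : ℝ → ℝ) (h Δ : ℝ) (n : ℕ) (P : Measure ℝ) [SigmaFinite P] (x : ℝ) : ℝ :=
  ∫ z : Fin n → ℝ, ghat K h Δ z x ∂(pm P n)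

/-- Mean `E[ĝ_{h,h'}(x)]` of the auxiliary estimator. -/
def mghat2 (K : ℝ → ℝ) (h h' Δ : ℝ) (n : ℕ) (P : Measure ℝ) [SigmaFinite P] (x : ℝ) : ℝ :=
  ∫ z : Fin n → ℝ, ghat2 K h h' Δ z x ∂(pm P n)

/-- The pointwise mean squared error `E[(ĝ_h(x) - g(x))²]`. -/
def mse (K : ℝ → ℝ) (h Δ : ℝ) (n : ℕ) (P : Measure ℝ) [SigmaFinite P]
    (g : ℝ → ℝ) (x : ℝ) : ℝ :=
  ∫ z : Fin n → ℝ, (ghat K h Δ z x - g x) ^ 2 ∂(pm P n)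

/-- The variance `Var[ĝ_h(x)]`. -/
def varghat (K : ℝ → ℝ) (h Δ : ℝ) (n : ℕ) (P : Measure ℝ) [SigmaFinite P] (x : ℝ) : ℝ :=
  ∫ z : Fin n → ℝ, (ghat K h Δ z x - mghat K h Δ n P x) ^ 2 ∂(pm P n)

/-- The constant `c₁ = 2 (L/⌊β⌋! ∫|K(v)||v|^β dv)²`. -/
def c1 (K : ℝ → ℝ) (β L : ℝ) : ℝ :=
  2 * (L / (Nat.factorial (hfloor β) : ℝ) * ∫ v : ℝ, |K v| * |v| ^ β) ^ 2

/-- The constant `c₁' = 2 (2‖g'‖_∞ ‖g‖₁ ‖K‖₁)²`. -/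
def c1' (K g : ℝ → ℝ) : ℝ := 2 * (2 * nsup (deriv g) * nl1 g * nl1 K) ^ 2

/-- The constant `c₂ = ‖(g*)'‖₁ ‖K‖₂² / (2π)`. -/
def c2 (K g : ℝ → ℝ) : ℝ := cnl1 (deriv (ft g)) * nl2sq K / (2 * π)

/-- The constant `c₂' = ‖K‖₂² ‖g‖₂²`. -/
def c2' (K g : ℝ → ℝ) : ℝ := nl2sq K * nl2sq g

/-- The constant `C₀ = (c/(2π)) ‖K‖₂² (‖(g*)'‖₁ + ‖g*‖₂²)`. -/
def C0 (c : ℝ) (K g : ℝ → ℝ) : ℝ :=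
  c / (2 * π) * nl2sq K * (cnl1 (deriv (ft g)) + cnl2sq (ft g))

/-- The penalty `V(h) = C₀ log(nΔ) / (nhΔ)`. -/
def Vfun (c : ℝ) (K g : ℝ → ℝ) (n : ℕ) (Δ h : ℝ) : ℝ :=
  C0 c K g * Real.log ((n : ℝ) * Δ) / ((n : ℝ) * h * Δ)

/-- The bandwidth collection `H = {j/M : 1 ≤ j ≤ M}`. -/
def bset (M : ℕ) : Finset ℝ := (Finset.Icc 1 M).image fun j : ℕ => (j : ℝ) / (M : ℝ)

/-- The quantity `A(h, x₀) = sup_{h' ∈ H} [ |ĝ_{h,h'}(x₀) - ĝ_{h'}(x₀)|² - V(h') ]₊`. -/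
def Afun (K : ℝ → ℝ) (Δ : ℝ) (H : Finset ℝ) (V : ℝ → ℝ) {n : ℕ}
    (z : Fin n → ℝ) (x h : ℝ) : ℝ :=
  ⨆ h' ∈ H, max ((ghat2 K h h' Δ z x - ghat K h' Δ z x) ^ 2 - V h') 0

/-- Average `Δ̄` of the sampling intervals. -/
def dbar {n : ℕ} (Δs : Fin n → ℝ) : ℝ := (n : ℝ)⁻¹ * ∑ k, Δs k

/-- Average `Δ²‾` of the squared sampling intervals. -/
def d2bar {n : ℕ} (Δs : Fin n → ℝ) : ℝ := (n : ℝ)⁻¹ * ∑ k, (Δs k) ^ 2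

/-- The truncation level `μ_n(h)`. -/
def mulev (c : ℝ) (K g : ℝ → ℝ) (n : ℕ) (Δ h : ℝ) : ℝ :=
  nl2sq K * (cnl1 (deriv (ft g)) + cnl2sq (ft g)) /
    (2 * π * nsup K * Real.sqrt (Vfun c K g n Δ h / 6))

/-- The truncated summand `W(h)` as a function of a single observation. -/
def Wtr (c : ℝ) (K g : ℝ → ℝ) (n : ℕ) (Δ h x₀ x : ℝ) : ℝ :=
  if |x| ≤ mulev c K g n Δ h then x / Δ * sk K h (x₀ - x) else 0

/-- The remainder summand `T(h)` as a function of a single observation. -/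
def Ttr (c : ℝ) (K g : ℝ → ℝ) (n : ℕ) (Δ h x₀ x : ℝ) : ℝ :=
  if mulev c K g n Δ h < |x| then x / Δ * sk K h (x₀ - x) else 0

/-- The empirical estimator of `‖(g*)'‖₁`. -/
def estDeriv (Δ : ℝ) {n : ℕ} (z : Fin n → ℝ) (hband : ℝ) : ℝ :=
  ∫ u : ℝ, ‖(((n : ℝ) * Δ)⁻¹ : ℂ) *
      ∑ k : Fin n, (z k : ℂ) ^ 2 *
        (Set.indicator (Set.Icc (-1 : ℝ) 1) (fun _ => (1 : ℂ)) (u * hband)) *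
        Complex.exp (Complex.I * u * z k)‖

/-- The empirical estimator of `‖g*‖₂²`. -/
def estL2 (Δ : ℝ) {n : ℕ} (z : Fin n → ℝ) (hband : ℝ) : ℝ :=
  ∫ u : ℝ, ‖(((n : ℝ) * Δ)⁻¹ : ℂ) *
      ∑ k : Fin n, (z k : ℂ) *
        (Set.indicator (Set.Icc (-1 : ℝ) 1) (fun _ => (1 : ℂ)) (u * hband)) *
        Complex.exp (Complex.I * u * z k)‖ ^ 2

/-- The data-driven penalty `V(h)` built with the estimated constant `C₀`. -/
def VfunHat (c : ℝ) (K : ℝ → ℝ) (n : ℕ) (Δ : ℝ) {m : ℕ} (z : Fin m → ℝ) (h : ℝ) : ℝ :=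
  c / (2 * π) * nl2sq K *
      (estDeriv Δ z (((n : ℝ) * Δ) ^ (-(1/3 : ℝ))) + estL2 Δ z (((n : ℝ) * Δ) ^ (-(1/3 : ℝ)))) *
    Real.log ((n : ℝ) * Δ) / ((n : ℝ) * h * Δ)

/-!
Differentiating the Lévy–Khinchine exponent gives `ψ' = i Δ g* ψ`, that is
`z P(dz) = Δ (g ⋆ P)(dz)`. Since no first moment is assumed, this identity of measures is
reached through bounded densities: integrating `ψ'` over `[u - t, u + t]` compares the Fourier
transforms of the finite signed measures `sin (t x) P(dx)` and `t sinc (t x) Δ (g ⋆ P)(dx)`, so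
these agree for every `t`, and dividing by `t sinc (t x)`, which does not vanish for small
`t ≠ 0`, gives the claim. It yields `E|Z| ≤ Δ ‖g‖₁` and `E ĝ_h(x) = E[(K_h ⋆ g)(x - Z)]`.

The bias is then the displacement by `Z`, at most the Lipschitz constant `‖g'‖_∞ ‖K‖₁` of
`K_h ⋆ g` times `E|Z|`, plus the deterministic bias `K_h ⋆ g - g`, from which the vanishing
moments of `K` remove the Taylor polynomial of `g`.
-/

section SignedDensity

variable {α F : Type*} [MeasurableSpace α] {μ : Measure α} {a : α → ℝ}

/-- The measure with density `a⁺`. The signed measure `a μ` is encoded as the difference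
`posDensity μ a - posDensity μ (-a)` of two positive measures. -/
def posDensity (μ : Measure α) (a : α → ℝ) : Measure α :=
  μ.withDensity fun x => ENNReal.ofReal (a x)

instance [SFinite μ] : SFinite (posDensity μ a) := by
  unfold posDensity
  infer_instance

lemma isFiniteMeasure_posDensity (ha : Integrable a μ) : IsFiniteMeasure (posDensity μ a) :=
  isFiniteMeasure_withDensity_ofReal ha.2

lemma integrable_posDensity_iff [NormedAddCommGroup F] [NormedSpace ℝ F] {f : α → F}
    (ha : AEMeasurable a μ) :
    Integrable f (posDensity μ a) ↔ Integrable (fun x => max (a x) 0 • f x) μ := by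
  rw [posDensity, integrable_withDensity_iff_integrable_smul₀' ha.ennreal_ofReal
    (ae_of_all _ fun _ => ENNReal.ofReal_lt_top)]
  simp only [ENNReal.toReal_ofReal']

lemma integral_posDensity [NormedAddCommGroup F] [NormedSpace ℝ F] (ha : AEMeasurable a μ)
    (f : α → F) : ∫ x, f x ∂posDensity μ a = ∫ x, max (a x) 0 • f x ∂μ := by
  rw [posDensity, integral_withDensity_eq_integral_toReal_smul₀ ha.ennreal_ofReal
    (ae_of_all _ fun _ => ENNReal.ofReal_lt_top)]
  simp only [ENNReal.toReal_ofReal']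

lemma integral_posDensity_sub [NormedAddCommGroup F] [NormedSpace ℝ F] {f : α → F}
    (ha : AEMeasurable a μ) (hf : Integrable f (posDensity μ a))
    (hf' : Integrable f (posDensity μ (-a))) :
    ∫ x, f x ∂posDensity μ a - ∫ x, f x ∂posDensity μ (-a) = ∫ x, a x • f x ∂μ := by
  rw [integral_posDensity ha, integral_posDensity ha.neg,
    ← integral_sub ((integrable_posDensity_iff ha).1 hf) ((integrable_posDensity_iff ha.neg).1 hf')]
  simp_rw [← sub_smul, Pi.neg_apply, max_zero_sub_max_neg_zero_eq_self]

lemma measureReal_univ_posDensity_add (ha : Integrable a μ) :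
    (posDensity μ a).real Set.univ + (posDensity μ (-a)).real Set.univ = ∫ x, |a x| ∂μ := by
  have hmass {b : α → ℝ} (hb : Integrable b μ) :
      (posDensity μ b).real Set.univ = ∫ x, max (b x) 0 ∂μ := by
    simpa using integral_posDensity hb.aemeasurable fun _ => (1 : ℝ)
  rw [hmass ha, hmass ha.neg, ← integral_add ha.pos_part ha.neg.pos_part]
  simp_rw [Pi.neg_apply, max_zero_add_max_neg_zero_eq_abs_self]

end SignedDensity

section CharFun

lemma integrable_cexp_inner {E : Type*} [NormedAddCommGroup E] [InnerProductSpace ℝ E]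
    [MeasurableSpace E] [BorelSpace E] [SecondCountableTopology E] (μ : Measure E)
    [IsFiniteMeasure μ] (t : E) :
    Integrable (fun x => Complex.exp (inner ℝ x t * Complex.I)) μ :=
  .of_bound (Continuous.aestronglyMeasurable (by fun_prop)) 1
    (ae_of_all _ fun _ => (Complex.norm_exp_ofReal_mul_I _).le)

lemma ae_eq_zero_of_forall_integral_smul_cexp_inner_eq_zero {E : Type*} [NormedAddCommGroup E]
    [InnerProductSpace ℝ E] [CompleteSpace E] [MeasurableSpace E] [BorelSpace E]
    [SecondCountableTopology E] {μ : Measure E} {a : E → ℝ} (ha : Integrable a μ)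
    (h : ∀ t : E, ∫ x, a x • Complex.exp (inner ℝ x t * Complex.I) ∂μ = 0) : a =ᵐ[μ] 0 := by
  have := isFiniteMeasure_posDensity ha
  have := isFiniteMeasure_posDensity ha.neg
  have heq : posDensity μ a = posDensity μ (-a) := by
    refine Measure.ext_of_charFun (funext fun t => sub_eq_zero.1 ?_)
    rw [charFun_apply, charFun_apply, integral_posDensity_sub ha.aemeasurable
      (integrable_cexp_inner _ t) (integrable_cexp_inner _ t), h t]
  rw [posDensity, posDensity, withDensity_eq_iff ha.aemeasurable.ennreal_ofReal
    ha.neg.aemeasurable.ennreal_ofReal ha.lintegral_lt_top.ne] at heq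
  filter_upwards [heq] with x hx
  have hparts := congrArg ENNReal.toReal hx
  rw [ENNReal.toReal_ofReal', ENNReal.toReal_ofReal', Pi.neg_apply] at hparts
  rw [Pi.zero_apply, ← max_zero_sub_max_neg_zero_eq_self (a x), hparts, sub_self]

lemma integrable_mul_cexp {μ : Measure ℝ} {a : ℝ → ℝ} (ha : Integrable a μ) (u : ℝ) :
    Integrable (fun x : ℝ => (a x : ℂ) * Complex.exp (u * x * Complex.I)) μ :=
  ha.ofReal.mul_bdd (c := 1) (Continuous.aestronglyMeasurable (by fun_prop))
    (ae_of_all _ fun x => by simpa using (Complex.norm_exp_ofReal_mul_I (u * x)).le)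

lemma integrable_cexp_mul_I (μ : Measure ℝ) [IsFiniteMeasure μ] (u : ℝ) :
    Integrable (fun x : ℝ => Complex.exp (u * x * Complex.I)) μ := by
  simpa using integrable_mul_cexp (integrable_const (μ := μ) (1 : ℝ)) u

lemma charFun_add_sub_charFun_sub (μ : Measure ℝ) [IsFiniteMeasure μ] (u t : ℝ) :
    charFun μ (u + t) - charFun μ (u - t) =
      2 * Complex.I * ∫ x, (sin (t * x) : ℂ) * Complex.exp (u * x * Complex.I) ∂μ := by
  rw [charFun_apply_real, charFun_apply_real, ← integral_sub (integrable_cexp_mul_I μ _)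
    (integrable_cexp_mul_I μ _), ← integral_const_mul]
  congr 1 with x
  have hadd : (↑(u + t) * x * Complex.I : ℂ) = u * x * Complex.I + t * x * Complex.I := by
    push_cast; ring
  have hsub : (↑(u - t) * x * Complex.I : ℂ) = u * x * Complex.I + -(t * x) * Complex.I := by
    push_cast; ring
  rw [hadd, hsub, Complex.exp_add, Complex.exp_add]
  push_cast
  rw [Complex.sin]
  linear_combination (Complex.exp (u * x * Complex.I) * (Complex.exp (t * x * Complex.I) -
    Complex.exp (-(t * x) * Complex.I))) * Complex.I_sq

lemma intervalIntegral_cexp_eq_sinc (u t x : ℝ) :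
    ∫ s in -t..t, Complex.exp (↑(u + s) * x * Complex.I) =
      2 * t * (sinc (t * x) * Complex.exp (u * x * Complex.I)) := by
  have hexp (s : ℝ) : Complex.exp (↑(u + s) * x * Complex.I) =
      Complex.exp (u * x * Complex.I) * Complex.exp (↑(x * s) * Complex.I) := by
    rw [← Complex.exp_add]; push_cast; ring_nf
  simp_rw [hexp]
  rw [intervalIntegral.integral_const_mul]
  rcases eq_or_ne x 0 with rfl | hx
  · simp [two_mul]
  rw [intervalIntegral.integral_comp_mul_left (fun s : ℝ => Complex.exp (s * Complex.I)) hx,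
    mul_neg, integral_exp_mul_I_eq_sinc, mul_comm x t, Complex.real_smul]
  have : (x : ℂ) ≠ 0 := by exact_mod_cast hx
  push_cast
  field_simp

lemma intervalIntegral_charFun_add (μ : Measure ℝ) [IsFiniteMeasure μ] (u t : ℝ) :
    ∫ s in -t..t, charFun μ (u + s) =
      2 * t * ∫ x, (sinc (t * x) : ℂ) * Complex.exp (u * x * Complex.I) ∂μ := by
  have : IsFiniteMeasure (volume.restrict (Set.uIoc (-t) t)) := ⟨by simp [Set.uIoc]⟩
  simp_rw [charFun_apply_real]
  rw [intervalIntegral_integral_swap, ← integral_const_mul]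
  · simp_rw [intervalIntegral_cexp_eq_sinc]
  · refine .of_bound (Continuous.aestronglyMeasurable (by fun_prop)) 1 (ae_of_all _ fun p => ?_)
    rw [Function.uncurry]
    exact_mod_cast (Complex.norm_exp_ofReal_mul_I ((u + p.1) * p.2)).le

end CharFun

section SizeBias

variable {P ν₁ ν₂ : Measure ℝ} [IsFiniteMeasure P] [IsFiniteMeasure ν₁] [IsFiniteMeasure ν₂]

lemma integrable_sin_mul (μ : Measure ℝ) [IsFiniteMeasure μ] (t : ℝ) :
    Integrable (fun x => sin (t * x)) μ :=
  .of_bound (Continuous.aestronglyMeasurable (by fun_prop)) 1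
    (ae_of_all _ fun _ => abs_sin_le_one _)

lemma integrable_sinc_mul (μ : Measure ℝ) [IsFiniteMeasure μ] (t : ℝ) :
    Integrable (fun x => sinc (t * x)) μ :=
  .of_bound (continuous_sinc.comp (by fun_prop)).aestronglyMeasurable 1
    (ae_of_all _ fun _ => abs_sinc_le_one _)

lemma sin_mul_eq_mul_sinc (t x : ℝ) : sin (t * x) = t * x * sinc (t * x) := by
  rcases eq_or_ne (t * x) 0 with h | h
  · simp [h]
  · rw [sinc_of_ne_zero h, mul_div_cancel₀ _ h]

lemma exists_sinc_one_div_mul_ne_zero (x : ℝ) : ∃ n : ℕ, sinc (1 / ((n : ℝ) + 1) * x) ≠ 0 := by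
  have h0 : Tendsto (fun n : ℕ => 1 / ((n : ℝ) + 1) * x) atTop (𝓝 0) := by
    simpa using tendsto_one_div_add_atTop_nhds_zero_nat.mul_const x
  have h1 : Tendsto (fun n : ℕ => sinc (1 / ((n : ℝ) + 1) * x)) atTop (𝓝 1) := by
    simpa [Function.comp_def] using (continuous_sinc.tendsto 0).comp h0
  exact (h1.eventually_ne one_ne_zero).exists

/-- The identity `x P(dx) = ν₁ - ν₂` of signed measures, in its characteristic function form,
which makes sense before `P` is known to have a first moment. -/
def IsSizeBias (P ν₁ ν₂ : Measure ℝ) : Prop :=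
  ∀ u, HasDerivAt (charFun P) (Complex.I * (charFun ν₁ u - charFun ν₂ u)) u

lemma IsSizeBias.integral_sin_mul_cexp (hP : IsSizeBias P ν₁ ν₂) (u t : ℝ) :
    ∫ x, (sin (t * x) : ℂ) * Complex.exp (u * x * Complex.I) ∂P =
      t * (∫ x, (sinc (t * x) : ℂ) * Complex.exp (u * x * Complex.I) ∂ν₁ -
        ∫ x, (sinc (t * x) : ℂ) * Complex.exp (u * x * Complex.I) ∂ν₂) := by
  have hcont (ν : Measure ℝ) [IsFiniteMeasure ν] : Continuous fun s => charFun ν (u + s) := by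
    fun_prop
  have hftc : ∫ s in -t..t, Complex.I * (charFun ν₁ (u + s) - charFun ν₂ (u + s)) =
      charFun P (u + t) - charFun P (u - t) := by
    rw [sub_eq_add_neg u]
    exact intervalIntegral.integral_eq_sub_of_hasDerivAt
      (fun s _ => (hP (u + s)).comp_const_add u s)
      (((hcont ν₁).sub (hcont ν₂)).const_mul _ |>.intervalIntegrable _ _)
  rw [charFun_add_sub_charFun_sub, intervalIntegral.integral_const_mul,
    intervalIntegral.integral_sub ((hcont ν₁).intervalIntegrable _ _)
      ((hcont ν₂).intervalIntegrable _ _),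
    intervalIntegral_charFun_add, intervalIntegral_charFun_add] at hftc
  refine mul_left_cancel₀ (mul_ne_zero two_ne_zero Complex.I_ne_zero) ?_
  rw [← hftc]
  ring

lemma IsSizeBias.ae_rnDeriv_mul_sin_eq (hP : IsSizeBias P ν₁ ν₂) {ρ : Measure ℝ}
    [SigmaFinite ρ] (hPρ : P ≪ ρ) (hρ₁ : ν₁ ≪ ρ) (hρ₂ : ν₂ ≪ ρ) (t : ℝ) :
    ∀ᵐ x ∂ρ, (P.rnDeriv ρ x).toReal * sin (t * x) =
      t * ((ν₁.rnDeriv ρ x).toReal * sinc (t * x) - (ν₂.rnDeriv ρ x).toReal * sinc (t * x)) := by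
  have hp := (integrable_toReal_rnDeriv_mul_iff hPρ).2 (integrable_sin_mul P t)
  have hn₁ := (integrable_toReal_rnDeriv_mul_iff hρ₁).2 (integrable_sinc_mul ν₁ t)
  have hn₂ := (integrable_toReal_rnDeriv_mul_iff hρ₂).2 (integrable_sinc_mul ν₂ t)
  refine (ae_eq_zero_of_forall_integral_smul_cexp_inner_eq_zero
    (hp.sub ((hn₁.sub hn₂).const_mul t)) fun u => ?_).mono fun x => sub_eq_zero.1
  have hpu := (integrable_rnDeriv_smul_iff hPρ).2 (integrable_mul_cexp (integrable_sin_mul P t) u)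
  have hnu₁ :=
    (integrable_rnDeriv_smul_iff hρ₁).2 (integrable_mul_cexp (integrable_sinc_mul ν₁ t) u)
  have hnu₂ :=
    (integrable_rnDeriv_smul_iff hρ₂).2 (integrable_mul_cexp (integrable_sinc_mul ν₂ t) u)
  have h := hP.integral_sin_mul_cexp u t
  rw [← integral_rnDeriv_smul hPρ, ← integral_rnDeriv_smul hρ₁, ← integral_rnDeriv_smul hρ₂,
    ← integral_sub hnu₁ hnu₂, ← integral_const_mul, ← sub_eq_zero,
    ← integral_sub hpu] at h
  · rw [← h]
    congr 1 with x
    simp only [Pi.sub_apply, Complex.real_smul, Real.inner_apply, Complex.ofReal_sub,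
      Complex.ofReal_mul]
    ring_nf
  · exact (hnu₁.sub hnu₂).const_mul _

lemma IsSizeBias.ae_mul_rnDeriv_eq (hP : IsSizeBias P ν₁ ν₂) {ρ : Measure ℝ}
    [SigmaFinite ρ] (hPρ : P ≪ ρ) (hρ₁ : ν₁ ≪ ρ) (hρ₂ : ν₂ ≪ ρ) :
    ∀ᵐ x ∂ρ, x * (P.rnDeriv ρ x).toReal =
      (ν₁.rnDeriv ρ x).toReal - (ν₂.rnDeriv ρ x).toReal := by
  have hsin (n : ℕ) := hP.ae_rnDeriv_mul_sin_eq hPρ hρ₁ hρ₂ (1 / ((n : ℝ) + 1))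
  filter_upwards [ae_all_iff.2 hsin] with x hx
  obtain ⟨n, hn⟩ := exists_sinc_one_div_mul_ne_zero x
  have ht : 1 / ((n : ℝ) + 1) ≠ 0 := by positivity
  have hxn := hx n
  rw [sin_mul_eq_mul_sinc] at hxn
  refine mul_right_cancel₀ (mul_ne_zero ht hn) ?_
  linear_combination hxn

lemma IsSizeBias.integrable_mul_and_integral_mul (hP : IsSizeBias P ν₁ ν₂) {f : ℝ → ℝ}
    (hf₁ : Integrable f ν₁) (hf₂ : Integrable f ν₂) :
    Integrable (fun x => x * f x) P ∧
      ∫ x, x * f x ∂P = ∫ x, f x ∂ν₁ - ∫ x, f x ∂ν₂ := by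
  set ρ := P + (ν₁ + ν₂)
  have hPρ : P ≪ ρ := .add_right .rfl _
  have hρ₁ : ν₁ ≪ ρ := (Measure.AbsolutelyContinuous.rfl.add_right _).trans
    (Measure.absolutelyContinuous_of_le (Measure.le_add_left le_rfl))
  have hρ₂ : ν₂ ≪ ρ := Measure.absolutelyContinuous_of_le
    (Measure.le_add_left (Measure.le_add_left le_rfl))
  have hf₁ρ := (integrable_toReal_rnDeriv_mul_iff hρ₁).2 hf₁
  have hf₂ρ := (integrable_toReal_rnDeriv_mul_iff hρ₂).2 hf₂
  have hdensity : (fun x => (P.rnDeriv ρ x).toReal * (x * f x)) =ᵐ[ρ] fun x =>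
      (ν₁.rnDeriv ρ x).toReal * f x - (ν₂.rnDeriv ρ x).toReal * f x := by
    filter_upwards [hP.ae_mul_rnDeriv_eq hPρ hρ₁ hρ₂] with x hx
    linear_combination f x * hx
  constructor
  · rw [← integrable_toReal_rnDeriv_mul_iff hPρ, integrable_congr hdensity]
    exact hf₁ρ.sub hf₂ρ
  · rw [← integral_toReal_rnDeriv_mul hPρ, integral_congr_ae hdensity, integral_sub hf₁ρ hf₂ρ,
      integral_toReal_rnDeriv_mul hρ₁, integral_toReal_rnDeriv_mul hρ₂]

lemma IsSizeBias.integral_mul (hP : IsSizeBias P ν₁ ν₂) {f : ℝ → ℝ}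
    (hf₁ : Integrable f ν₁) (hf₂ : Integrable f ν₂) :
    ∫ x, x * f x ∂P = ∫ x, f x ∂ν₁ - ∫ x, f x ∂ν₂ :=
  (hP.integrable_mul_and_integral_mul hf₁ hf₂).2

lemma IsSizeBias.integrable_mul (hP : IsSizeBias P ν₁ ν₂) {f : ℝ → ℝ}
    (hf₁ : Integrable f ν₁) (hf₂ : Integrable f ν₂) : Integrable (fun x => x * f x) P :=
  (hP.integrable_mul_and_integral_mul hf₁ hf₂).1

lemma IsSizeBias.integrable_id (hP : IsSizeBias P ν₁ ν₂) : Integrable (fun x => x) P := by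
  simpa using hP.integrable_mul (integrable_const 1) (integrable_const 1)

lemma IsSizeBias.integral_abs_le (hP : IsSizeBias P ν₁ ν₂) :
    ∫ x, |x| ∂P ≤ ν₁.real Set.univ + ν₂.real Set.univ := by
  set s : ℝ → ℝ := fun x => if 0 ≤ x then 1 else -1
  have hs : Measurable s := .ite measurableSet_Ici measurable_const measurable_const
  have hs1 (x : ℝ) : |s x| = 1 := by unfold s; split_ifs <;> simp
  have hsint (ν : Measure ℝ) [IsFiniteMeasure ν] : Integrable s ν :=
    .of_bound hs.aestronglyMeasurable 1 (ae_of_all _ fun x => (hs1 x).le)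
  have hsle (ν : Measure ℝ) [IsFiniteMeasure ν] : |∫ x, s x ∂ν| ≤ ν.real Set.univ := by
    simpa [hs1] using abs_integral_le_integral_abs (f := s) (μ := ν)
  have habs (x : ℝ) : |x| = x * s x := by
    unfold s; split_ifs with hx
    · rw [abs_of_nonneg hx, mul_one]
    · rw [abs_of_neg (not_le.1 hx), mul_neg_one]
  simp_rw [habs]
  rw [hP.integral_mul (hsint ν₁) (hsint ν₂)]
  linarith [(abs_le.1 (hsle ν₁)).2, (abs_le.1 (hsle ν₂)).1]

end SizeBias

section Convolution

variable {P : Measure ℝ} {q f : ℝ → ℝ}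

/-- The convolution of `P` with the measure of density `q⁺`, so that
`posConv P q - posConv P (-q)` encodes the signed measure `P ∗ (q(y) dy)`. -/
def posConv (P : Measure ℝ) (q : ℝ → ℝ) : Measure ℝ :=
  P.conv (posDensity volume q)

lemma isFiniteMeasure_posConv [IsFiniteMeasure P] (hq : Integrable q) :
    IsFiniteMeasure (posConv P q) := by
  have := isFiniteMeasure_posDensity hq
  unfold posConv
  infer_instance

lemma charFun_posConv_sub [IsFiniteMeasure P] (hq : Integrable q) (u : ℝ) :
    charFun (posConv P q) u - charFun (posConv P (-q)) u =
      charFun P u * ∫ y, (q y : ℂ) * Complex.exp (u * y * Complex.I) := by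
  have := isFiniteMeasure_posDensity hq
  have := isFiniteMeasure_posDensity hq.neg
  rw [posConv, posConv, charFun_conv, charFun_conv, ← mul_sub]
  simp_rw [charFun_apply_real]
  rw [integral_posDensity_sub hq.aemeasurable (integrable_cexp_mul_I _ u)
    (integrable_cexp_mul_I _ u)]
  simp_rw [Complex.real_smul]

lemma measureReal_univ_posConv_add [IsProbabilityMeasure P] (hq : Integrable q) :
    (posConv P q).real Set.univ + (posConv P (-q)).real Set.univ = ∫ y, |q y| := by
  have := isFiniteMeasure_posDensity hq
  have := isFiniteMeasure_posDensity hq.neg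
  have hmass (ν : Measure ℝ) [IsFiniteMeasure ν] : (P.conv ν).real Set.univ = ν.real Set.univ := by
    rw [Measure.conv, map_measureReal_apply (by fun_prop) .univ, Set.preimage_univ,
      ← Set.univ_prod_univ, measureReal_prod_prod, probReal_univ, one_mul]
  rw [posConv, posConv, hmass, hmass, measureReal_univ_posDensity_add hq]

lemma posConv_le_smul_volume {C : ℝ} (hq : ∀ y, q y ≤ C) :
    posConv P q ≤ (P Set.univ * ENNReal.ofReal C) • volume := by
  refine Measure.le_iff.2 fun s hs => ?_
  have hle : posDensity volume q ≤ ENNReal.ofReal C • volume := by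
    rw [← withDensity_const]
    exact withDensity_mono (ae_of_all _ fun y => ENNReal.ofReal_le_ofReal (hq y))
  have hshift (z : ℝ) : posDensity volume q ((z + ·) ⁻¹' s) ≤ ENNReal.ofReal C * volume s :=
    (hle _).trans_eq (by simp [measure_preimage_add])
  calc posConv P q s = ∫⁻ z, posDensity volume q ((z + ·) ⁻¹' s) ∂P := by
        rw [posConv, Measure.conv, Measure.map_apply (by fun_prop) hs,
          Measure.prod_apply (measurable_add hs)]
        rfl
    _ ≤ ∫⁻ _, ENNReal.ofReal C * volume s ∂P := lintegral_mono hshift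
    _ = ((P Set.univ * ENNReal.ofReal C) • volume) s := by
        rw [lintegral_const, Measure.smul_apply, smul_eq_mul]
        ring

lemma integrable_posConv_of_integrable [IsFiniteMeasure P] {C : ℝ} (hq : ∀ y, q y ≤ C)
    (hf : Integrable f) : Integrable f (posConv P q) :=
  (hf.smul_measure (ENNReal.mul_ne_top (measure_ne_top P _) ENNReal.ofReal_ne_top)).mono_measure
    (posConv_le_smul_volume hq)

lemma integrable_posConv_const_mul [IsFiniteMeasure P] {C : ℝ} (c : ℝ) (hq : ∀ y, |q y| ≤ C)
    (hf : Integrable f) :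
    Integrable f (posConv P fun y => c * q y) ∧ Integrable f (posConv P (-fun y => c * q y)) := by
  have hcq (y : ℝ) : |c * q y| ≤ |c| * C := by
    rw [abs_mul]
    exact mul_le_mul_of_nonneg_left (hq y) (abs_nonneg c)
  exact ⟨integrable_posConv_of_integrable (fun y => (abs_le.1 (hcq y)).2) hf,
    integrable_posConv_of_integrable (fun y => neg_le.1 (abs_le.1 (hcq y)).1) hf⟩

lemma integral_posConv_sub [SFinite P] (hq : AEMeasurable q)
    (hf : Integrable f (posConv P q)) (hf' : Integrable f (posConv P (-q))) :
    ∫ x, f x ∂posConv P q - ∫ x, f x ∂posConv P (-q) =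
      ∫ z, (∫ y, q y * f (z + y)) ∂P := by
  have hfib {r : ℝ → ℝ} (hr : Integrable f (posConv P r)) :
      (∀ᵐ z ∂P, Integrable (fun y => f (z + y)) (posDensity volume r)) ∧
        Integrable (fun z => ∫ y, f (z + y) ∂posDensity volume r) P := by
    have hprod : Integrable (fun p : ℝ × ℝ => f (p.1 + p.2)) (P.prod (posDensity volume r)) :=
      hr.comp_measurable measurable_add
    exact ⟨hprod.prod_right_ae, hprod.integral_prod_left⟩
  rw [posConv, posConv, integral_conv hf, integral_conv hf',
    ← integral_sub (hfib hf).2 (hfib hf').2]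
  refine integral_congr_ae ?_
  filter_upwards [(hfib hf).1, (hfib hf').1] with z hz hz'
  exact integral_posDensity_sub hq hz hz'

end Convolution

section LevyExponent

variable {N g f : ℝ → ℝ} {P : Measure ℝ} {Δ : ℝ}

lemma norm_cexp_I_mul_mul (u x : ℝ) : ‖Complex.exp (Complex.I * u * x)‖ = 1 := by
  rw [mul_assoc, mul_comm, ← Complex.ofReal_mul, Complex.norm_exp_ofReal_mul_I]

lemma norm_cexp_sub_one_mul_le (u x N : ℝ) :
    ‖(Complex.exp (Complex.I * u * x) - 1) * (N : ℂ)‖ ≤ |u| * |x * N| := by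
  rw [norm_mul, Complex.norm_real, mul_assoc Complex.I, ← Complex.ofReal_mul, abs_mul x,
    ← mul_assoc, ← abs_mul]
  exact mul_le_mul_of_nonneg_right Real.norm_exp_I_mul_ofReal_sub_one_le (norm_nonneg N)

lemma hasDerivAt_levyExponent (hg : Integrable g) (hN : ∀ᵐ x, x * N x = g x) (u : ℝ) :
    HasDerivAt (fun u : ℝ => ∫ x : ℝ, (Complex.exp (Complex.I * u * x) - 1) * (N x : ℂ))
      (Complex.I * ft g u) u := by
  have hNm : AEStronglyMeasurable N := by
    refine (hg.aemeasurable.div measurable_id.aemeasurable).aestronglyMeasurable.congr ?_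
    filter_upwards [hN, Measure.ae_ne volume 0] with x hx hx0
    rw [Pi.div_apply, ← hx, id, mul_div_cancel_left₀ _ hx0]
  have hF (v : ℝ) : AEStronglyMeasurable
      (fun x : ℝ => (Complex.exp (Complex.I * v * x) - 1) * (N x : ℂ)) :=
    (Continuous.aestronglyMeasurable (by fun_prop)).mul
      (Complex.continuous_ofReal.comp_aestronglyMeasurable hNm)
  have hFint : Integrable fun x : ℝ => (Complex.exp (Complex.I * u * x) - 1) * (N x : ℂ) := by
    refine (hg.abs.const_mul |u|).mono' (hF u) ?_
    filter_upwards [hN] with x hx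
    exact hx ▸ norm_cexp_sub_one_mul_le u x (N x)
  have hF' : AEStronglyMeasurable
      (fun x : ℝ => Complex.I * (Complex.exp (Complex.I * u * x) * (g x : ℂ))) :=
    ((Continuous.aestronglyMeasurable (by fun_prop)).mul
      hg.ofReal.aestronglyMeasurable).const_mul _
  have hderiv : ∀ᵐ x : ℝ, ∀ v ∈ (Set.univ : Set ℝ), HasDerivAt
      (fun v : ℝ => (Complex.exp (Complex.I * v * x) - 1) * (N x : ℂ))
      (Complex.I * (Complex.exp (Complex.I * v * x) * (g x : ℂ))) v := by
    filter_upwards [hN] with x hx v _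
    have hlin : HasDerivAt (fun v : ℝ => Complex.I * (v : ℂ) * x) (Complex.I * x) v := by
      simpa using ((Complex.ofRealCLM.hasDerivAt (x := v)).const_mul Complex.I).mul_const (x : ℂ)
    refine ((hlin.cexp.sub_const 1).mul_const (N x : ℂ)).congr_deriv ?_
    rw [← hx]
    push_cast
    ring
  have h := (hasDerivAt_integral_of_dominated_loc_of_deriv_le (𝕜 := ℝ)
    (F' := fun v x : ℝ => Complex.I * (Complex.exp (Complex.I * v * x) * (g x : ℂ)))
    (bound := fun x => |g x|) Filter.univ_mem (.of_forall hF) hFint hF'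
    (ae_of_all _ fun x v _ => by simp [norm_cexp_I_mul_mul]) hg.abs hderiv).2
  rwa [integral_const_mul] at h

lemma IncrementLawN.charFun_eq (hP : IncrementLawN P Δ N) (u : ℝ) :
    charFun P u =
      Complex.exp (Δ * ∫ x : ℝ, (Complex.exp (Complex.I * u * x) - 1) * (N x : ℂ)) := by
  rw [← hP u, charFun_apply_real]
  congr 1 with x
  ring_nf

lemma IncrementLawN.hasDerivAt_charFun (hP : IncrementLawN P Δ N) (hg : Integrable g)
    (hN : ∀ᵐ x, x * N x = g x) (u : ℝ) :
    HasDerivAt (charFun P) (Complex.I * (charFun P u * (Δ * ft g u))) u := by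
  rw [funext hP.charFun_eq]
  exact ((hasDerivAt_levyExponent hg hN u).const_mul (Δ : ℂ)).cexp.congr_deriv (by ring)

lemma IncrementLaw.isSizeBias [IsFiniteMeasure P] (hP : IncrementLaw P Δ g)
    (hg : Integrable g) :
    IsSizeBias P (posConv P fun y => Δ * g y) (posConv P (-fun y => Δ * g y)) := by
  intro u
  have hN : ∀ᵐ x, x * (g x / x) = g x := by
    filter_upwards [Measure.ae_ne volume 0] with x hx using mul_div_cancel₀ _ hx
  refine (IncrementLawN.hasDerivAt_charFun hP hg hN u).congr_deriv ?_
  rw [charFun_posConv_sub (hg.const_mul Δ), ft, ← integral_const_mul]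
  congr! 4
  push_cast
  ring_nf

variable [IsProbabilityMeasure P]

lemma IncrementLaw.integrable_id (hP : IncrementLaw P Δ g) (hg : Integrable g) :
    Integrable (fun z => z) P := by
  have := isFiniteMeasure_posConv (P := P) (hg.const_mul Δ)
  have := isFiniteMeasure_posConv (P := P) (hg.const_mul Δ).neg
  exact (hP.isSizeBias hg).integrable_id

lemma IncrementLaw.integral_abs_le (hP : IncrementLaw P Δ g) (hg : Integrable g) :
    ∫ z, |z| ∂P ≤ |Δ| * nl1 g := by
  have := isFiniteMeasure_posConv (P := P) (hg.const_mul Δ)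
  have := isFiniteMeasure_posConv (P := P) (hg.const_mul Δ).neg
  refine (hP.isSizeBias hg).integral_abs_le.trans_eq ?_
  simp_rw [measureReal_univ_posConv_add (hg.const_mul Δ), abs_mul]
  rw [integral_const_mul, nl1]

variable {C : ℝ}

lemma IncrementLaw.integrable_mul (hP : IncrementLaw P Δ g) (hg : Integrable g)
    (hgC : ∀ y, |g y| ≤ C) (hf : Integrable f) : Integrable (fun z => z * f z) P := by
  have := isFiniteMeasure_posConv (P := P) (hg.const_mul Δ)
  have := isFiniteMeasure_posConv (P := P) (hg.const_mul Δ).neg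
  have hfint := integrable_posConv_const_mul (P := P) Δ hgC hf
  exact (hP.isSizeBias hg).integrable_mul hfint.1 hfint.2

lemma IncrementLaw.integral_mul (hP : IncrementLaw P Δ g) (hg : Integrable g)
    (hgC : ∀ y, |g y| ≤ C) (hf : Integrable f) :
    ∫ z, z * f z ∂P = Δ * ∫ z, (∫ y, g y * f (z + y)) ∂P := by
  have := isFiniteMeasure_posConv (P := P) (hg.const_mul Δ)
  have := isFiniteMeasure_posConv (P := P) (hg.const_mul Δ).neg
  have hfint := integrable_posConv_const_mul (P := P) Δ hgC hf
  rw [(hP.isSizeBias hg).integral_mul hfint.1 hfint.2,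
    integral_posConv_sub (hg.const_mul Δ).aemeasurable hfint.1 hfint.2]
  simp_rw [mul_assoc, integral_const_mul]

end LevyExponent

section Taylor

variable {f : ℝ → ℝ}

lemma exists_sub_sum_iteratedDeriv_eq {l : ℕ} (hf : ContDiff ℝ l f) (x t : ℝ) :
    ∃ ξ, |ξ - x| ≤ |t| ∧
      f (x + t) - ∑ j ∈ range (l + 1), iteratedDeriv j f x * t ^ j / (j.factorial : ℝ) =
        (iteratedDeriv l f ξ - iteratedDeriv l f x) * t ^ l / (l.factorial : ℝ) := by
  rcases l with _ | k
  · exact ⟨x + t, by simp, by simp⟩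
  rcases eq_or_ne t 0 with rfl | ht
  · refine ⟨x, by simp, ?_⟩
    rw [sum_range_succ', sum_eq_zero fun j _ => by simp]
    simp
  have hxt : x ≠ x + t := by simpa [eq_comm] using ht
  obtain ⟨ξ, hξ, hrem⟩ := taylor_mean_remainder_lagrange_iteratedDeriv hxt hf.contDiffOn
  refine ⟨ξ, by simpa using Set.abs_sub_left_of_mem_uIcc (Set.uIoo_subset_uIcc_self hξ), ?_⟩
  have htaylor : taylorWithinEval f k (Set.uIcc x (x + t)) x (x + t) =
      ∑ j ∈ range (k + 1), iteratedDeriv j f x * t ^ j / (j.factorial : ℝ) := by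
    rw [taylor_within_apply]
    refine sum_congr rfl fun j hj => ?_
    rw [iteratedDerivWithin_eq_iteratedDeriv (uniqueDiffOn_uIcc hxt)
      (hf.contDiffAt.of_le (by exact_mod_cast (mem_range.1 hj).le)) Set.left_mem_uIcc,
      add_sub_cancel_left, smul_eq_mul]
    ring
  rw [htaylor, add_sub_cancel_left] at hrem
  rw [sum_range_succ, ← sub_sub, hrem]
  ring

lemma hfloor_lt {β : ℝ} (hβ : 0 < β) : (hfloor β : ℝ) < β := by
  have hpos : 0 < ⌈β⌉₊ := Nat.ceil_pos.2 hβ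
  rw [hfloor, Nat.cast_pred hpos]
  linarith [Nat.ceil_lt_add_one hβ.le]

lemma hfloor_mono : Monotone hfloor := fun _ _ h =>
  Nat.sub_le_sub_right (Nat.ceil_mono h) 1

variable {β L : ℝ}

lemma Holder.nonneg (hf : Holder β L f) : 0 ≤ L := by
  simpa using (abs_nonneg _).trans (hf.2 1 0)

lemma Holder.contDiff (hβ : 0 < β) (hf : Holder β L f) : ContDiff ℝ (hfloor β) f := by
  refine contDiff_nat_iff_iteratedDeriv.2 ⟨fun m hm => ?_, hf.1⟩
  rcases hm.lt_or_eq with h | rfl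
  · exact (hf.1 m h).continuous
  have hγ : 0 < β - hfloor β := sub_pos.2 (hfloor_lt hβ)
  refine continuous_iff_continuousAt.2 fun x => tendsto_iff_dist_tendsto_zero.2 ?_
  refine squeeze_zero (fun _ => dist_nonneg) (fun y => hf.2 y x) ?_
  have hmodulus : Continuous fun y => L * |y - x| ^ (β - (hfloor β : ℝ)) :=
    continuous_const.mul ((continuous_abs.comp (continuous_sub_right x)).rpow_const
      fun _ => Or.inr hγ.le)
  simpa [hγ.ne'] using hmodulus.tendsto x

lemma Holder.abs_sub_sum_iteratedDeriv_le (hβ : 0 < β) (hf : Holder β L f) (x t : ℝ) :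
    |f (x + t) - ∑ j ∈ range (hfloor β + 1), iteratedDeriv j f x * t ^ j / (j.factorial : ℝ)| ≤
      L / ((hfloor β).factorial : ℝ) * |t| ^ β := by
  obtain ⟨ξ, hξ, hrem⟩ := exists_sub_sum_iteratedDeriv_eq (hf.contDiff hβ) x t
  have hγ : 0 ≤ β - hfloor β := sub_nonneg.2 (hfloor_lt hβ).le
  have hL := hf.nonneg
  have hosc : |iteratedDeriv (hfloor β) f ξ - iteratedDeriv (hfloor β) f x| ≤
      L * |t| ^ (β - hfloor β) :=
    (hf.2 ξ x).trans (by gcongr)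
  have hpow : |t| ^ (β - hfloor β) * |t| ^ hfloor β = |t| ^ β := by
    rw [← rpow_natCast, ← rpow_add_of_nonneg (abs_nonneg t) hγ (by positivity), sub_add_cancel]
  rw [hrem, abs_div, abs_mul, abs_pow, Nat.abs_cast, div_mul_eq_mul_div, ← hpow, ← mul_assoc]
  gcongr

end Taylor

section Smoothing

variable {g K : ℝ → ℝ} {h : ℝ}

/-- The smoothed function `K_h ⋆ g`, written with the kernel at unit scale. -/
def smooth (K : ℝ → ℝ) (h : ℝ) (g : ℝ → ℝ) (x : ℝ) : ℝ :=
  ∫ v, K v * g (x - h * v)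

lemma integral_mul_sk_sub (g K : ℝ → ℝ) (hh : 0 < h) (x : ℝ) :
    ∫ y, g y * sk K h (x - y) = smooth K h g x := by
  have hscale := Measure.integral_comp_mul_left (fun w => g (x - w) * sk K h w) h
  rw [abs_of_pos (inv_pos.2 hh), smul_eq_mul] at hscale
  rw [← integral_sub_left_eq_self (fun y => g y * sk K h (x - y)) volume x]
  simp_rw [sub_sub_cancel]
  rw [← mul_inv_cancel_left₀ hh.ne' (∫ w, g (x - w) * sk K h w), ← hscale, smooth,
    ← integral_const_mul]
  congr 1 with v
  rw [sk, mul_div_cancel_left₀ _ hh.ne']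
  field_simp

lemma integrable_sk (hK : Integrable K) (hh : h ≠ 0) : Integrable (sk K h) :=
  (hK.comp_div hh).const_mul _

lemma integrable_mul_comp_sub_mul (hK : Integrable K) (hg : Continuous g) {C : ℝ}
    (hgC : ∀ y, |g y| ≤ C) (h x : ℝ) : Integrable fun v => K v * g (x - h * v) :=
  hK.mul_bdd (c := C) (hg.comp (by fun_prop)).aestronglyMeasurable (ae_of_all _ fun _ => hgC _)

lemma lipschitzWith_smooth {M : NNReal} (hK : Integrable K) (hg : LipschitzWith M g) {C : ℝ}
    (hgC : ∀ y, |g y| ≤ C) (h : ℝ) :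
    LipschitzWith (M * (nl1 K).toNNReal) (smooth K h g) := by
  refine .of_dist_le_mul fun x y => ?_
  have hint := integrable_mul_comp_sub_mul hK hg.continuous hgC h
  have hbound (v : ℝ) : ‖K v * g (x - h * v) - K v * g (y - h * v)‖ ≤ |K v| * (M * |x - y|) := by
    rw [← mul_sub, norm_mul]
    refine mul_le_mul_of_nonneg_left ?_ (abs_nonneg _)
    simpa [Real.dist_eq] using hg.dist_le_mul (x - h * v) (y - h * v)
  have hnl1 : 0 ≤ nl1 K := integral_nonneg fun _ => abs_nonneg _
  rw [Real.dist_eq, smooth, smooth, ← integral_sub (hint x) (hint y), NNReal.coe_mul,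
    Real.coe_toNNReal _ hnl1, Real.dist_eq]
  refine (norm_integral_le_of_norm_le (hK.abs.mul_const _) (ae_of_all _ hbound)).trans_eq ?_
  rw [integral_mul_const, nl1]
  ring

lemma abs_le_nl1_add_of_lipschitzWith {M : NNReal} (hg : LipschitzWith M g)
    (hgi : Integrable g) (x : ℝ) : |g x| ≤ nl1 g + M := by
  have hnear (y : ℝ) (hy : y ∈ Set.Ioc x (x + 1)) : |g x| ≤ |g y| + M := by
    have hxy : |x - y| ≤ 1 := abs_le.2 ⟨by linarith [hy.2], by linarith [hy.1]⟩
    have hlip : |g x - g y| ≤ M :=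
      (hg.dist_le_mul x y).trans (mul_le_of_le_one_right M.2 hxy)
    linarith [abs_sub_abs_le_abs_sub (g x) (g y)]
  calc |g x| = ∫ _ in Set.Ioc x (x + 1), |g x| := by simp
    _ ≤ ∫ y in Set.Ioc x (x + 1), (|g y| + M) :=
        setIntegral_mono_on (integrableOn_const (by simp))
          (hgi.abs.integrableOn.add (integrableOn_const (by simp))) measurableSet_Ioc hnear
    _ = (∫ y in Set.Ioc x (x + 1), |g y|) + M := by
        rw [integral_add hgi.abs.integrableOn (integrableOn_const (by simp))]
        simp
    _ ≤ nl1 g + M := by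
        gcongr
        exact setIntegral_le_integral hgi.abs (ae_of_all _ fun _ => abs_nonneg _)

lemma G5.lipschitzWith (hg : G5 g) : LipschitzWith (nsup (deriv g)).toNNReal g :=
  lipschitzWith_of_nnnorm_deriv_le hg.1 fun x =>
    NNReal.le_toNNReal_of_coe_le (le_ciSup hg.2 x)

variable {m : ℕ}

lemma KernelOrder.integrable (hK : KernelOrder m K) : Integrable K := by
  simpa using hK.1 0 m.zero_le

lemma KernelOrder.mono {m' : ℕ} (hK : KernelOrder m K) (hm : m' ≤ m) : KernelOrder m' K :=
  ⟨fun j hj => hK.1 j (hj.trans hm), hK.2.1, fun j hj1 hj => hK.2.2 j hj1 (hj.trans hm)⟩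

lemma KernelOrder.integrable_mul_pow (hK : KernelOrder m K) (c : ℕ → ℝ) :
    ∀ j ∈ range (m + 1), Integrable fun v => K v * (c j * v ^ j) := fun j hj => by
  simpa only [mul_comm, mul_left_comm] using
    (hK.1 j (Nat.lt_succ_iff.1 (mem_range.1 hj))).const_mul (c j)

lemma KernelOrder.integrable_mul_sum (hK : KernelOrder m K) (c : ℕ → ℝ) :
    Integrable fun v => K v * ∑ j ∈ range (m + 1), c j * v ^ j := by
  simp_rw [mul_sum]
  exact integrable_finsetSum _ (hK.integrable_mul_pow c)

lemma KernelOrder.integral_mul_sum (hK : KernelOrder m K) (c : ℕ → ℝ) :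
    ∫ v, K v * ∑ j ∈ range (m + 1), c j * v ^ j = c 0 := by
  have hmoment (j : ℕ) : ∫ v, K v * (c j * v ^ j) = c j * ∫ v, v ^ j * K v := by
    rw [← integral_const_mul]
    congr 1 with v
    ring
  simp_rw [mul_sum]
  rw [integral_finsetSum _ (hK.integrable_mul_pow c), sum_range_succ', sum_eq_zero, hmoment]
  · simp [hK.2.1]
  · intro j hj
    rw [hmoment, hK.2.2 _ j.succ_pos (mem_range.1 hj), mul_zero]

lemma integrable_abs_mul_rpow {α β : ℝ} (hK : Integrable K)
    (hKα : Integrable fun v => |v| ^ α * |K v|) (hβ : 0 ≤ β) (hβα : β ≤ α) :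
    Integrable fun v => |K v| * |v| ^ β := by
  refine (hK.abs.add hKα).mono' ?_ (ae_of_all _ fun v => ?_)
  · exact hK.abs.aestronglyMeasurable.mul
      (measurable_id.abs.pow_const β).aestronglyMeasurable
  have hpow : |v| ^ β ≤ 1 + |v| ^ α := by
    rcases le_total |v| 1 with h1 | h1
    · linarith [rpow_le_one (abs_nonneg v) h1 hβ, rpow_nonneg (abs_nonneg v) α]
    · linarith [rpow_le_rpow_of_exponent_le h1 hβα]
  rw [Real.norm_of_nonneg (by positivity), Pi.add_apply]
  linarith [mul_le_mul_of_nonneg_left hpow (abs_nonneg (K v))]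

lemma abs_smooth_sub_self_le {β L C : ℝ} (hβ : 0 < β) (hg : Holder β L g)
    (hgC : ∀ y, |g y| ≤ C) (hK : KernelOrder (hfloor β) K)
    (hKβ : Integrable fun v => |K v| * |v| ^ β) (hh : 0 ≤ h) (x : ℝ) :
    |smooth K h g x - g x| ≤
      L / ((hfloor β).factorial : ℝ) * (∫ v, |K v| * |v| ^ β) * h ^ β := by
  set c : ℕ → ℝ := fun j => iteratedDeriv j g x * (-h) ^ j / (j.factorial : ℝ)
  have htaylor (v : ℝ) :
      ‖K v * g (x - h * v) - K v * ∑ j ∈ range (hfloor β + 1), c j * v ^ j‖ ≤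
        L / ((hfloor β).factorial : ℝ) * h ^ β * (|K v| * |v| ^ β) := by
    have hT := hg.abs_sub_sum_iteratedDeriv_le hβ x (-h * v)
    have hsum : ∑ j ∈ range (hfloor β + 1), c j * v ^ j = ∑ j ∈ range (hfloor β + 1),
        iteratedDeriv j g x * (-h * v) ^ j / (j.factorial : ℝ) :=
      sum_congr rfl fun j _ => by rw [mul_pow]; ring
    rw [abs_mul, abs_neg, abs_of_nonneg hh, mul_rpow hh (abs_nonneg v), ← hsum, neg_mul,
      ← sub_eq_add_neg] at hT
    rw [← mul_sub, Real.norm_eq_abs, abs_mul]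
    linarith [mul_le_mul_of_nonneg_left hT (abs_nonneg (K v))]
  have hKg := integrable_mul_comp_sub_mul hK.integrable (hg.contDiff hβ).continuous hgC h x
  have hc0 : c 0 = g x := by simp [c]
  rw [smooth, ← hc0, ← hK.integral_mul_sum c, ← integral_sub hKg (hK.integrable_mul_sum c)]
  refine (norm_integral_le_of_norm_le (hKβ.const_mul _) (ae_of_all _ htaylor)).trans_eq ?_
  rw [integral_const_mul]
  ring

end Smoothing

section Estimator

variable {g K : ℝ → ℝ} {h Δ : ℝ} {n : ℕ} {P : Measure ℝ} [IsProbabilityMeasure P]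

lemma abs_integral_comp_sub_sub_le {F : ℝ → ℝ} {M : NNReal} (hF : LipschitzWith M F)
    (hP : Integrable (fun z => z) P) (x : ℝ) :
    |∫ z, F (x - z) ∂P - F x| ≤ M * ∫ z, |z| ∂P := by
  have hbound (z : ℝ) : ‖F (x - z) - F x‖ ≤ M * |z| := by
    simpa [Real.dist_eq] using hF.dist_le_mul (x - z) x
  have hFx : Continuous fun z => F (x - z) := hF.continuous.comp (continuous_sub_left x)
  have hdiff : Integrable (fun z => F (x - z) - F x) P :=
    (hP.abs.const_mul (M : ℝ)).mono' (hFx.sub continuous_const).aestronglyMeasurable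
      (ae_of_all _ hbound)
  have hint : Integrable (fun z => F (x - z)) P :=
    (hdiff.add (integrable_const (F x))).congr (ae_of_all _ fun z => sub_add_cancel _ _)
  have hmean : ∫ z, F (x - z) ∂P - F x = ∫ z, (F (x - z) - F x) ∂P := by
    rw [integral_sub hint (integrable_const _)]
    simp
  rw [hmean, ← integral_const_mul]
  exact norm_integral_le_of_norm_le (hP.abs.const_mul _) (ae_of_all _ hbound)

lemma mghat_eq_inv_mul_integral (hn : n ≠ 0) (x : ℝ)
    (hint : Integrable (fun z => z * sk K h (x - z)) P) :
    mghat K h Δ n P x = Δ⁻¹ * ∫ z, z * sk K h (x - z) ∂P := by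
  simp only [mghat, ghat, pm]
  rw [integral_const_mul,
    integral_finsetSum _ fun k _ => integrable_comp_eval (μ := fun _ : Fin n => P) hint]
  simp_rw [integral_comp_eval (μ := fun _ : Fin n => P) hint.aestronglyMeasurable]
  simp only [sum_const, card_univ, Fintype.card_fin, nsmul_eq_mul]
  field_simp

lemma IncrementLaw.mghat_eq_integral_smooth {C : ℝ} (hP : IncrementLaw P Δ g) (hg : Integrable g)
    (hgC : ∀ y, |g y| ≤ C) (hK : Integrable K) (hh : 0 < h) (hΔ : Δ ≠ 0) (hn : n ≠ 0) (x : ℝ) :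
    mghat K h Δ n P x = ∫ z, smooth K h g (x - z) ∂P := by
  have hsk : Integrable fun z => sk K h (x - z) := (integrable_sk hK hh.ne').comp_sub_left x
  rw [mghat_eq_inv_mul_integral hn x (hP.integrable_mul hg hgC hsk),
    hP.integral_mul hg hgC hsk, inv_mul_cancel_left₀ hΔ]
  simp_rw [← sub_sub, integral_mul_sk_sub g K hh]

lemma IncrementLaw.abs_mghat_sub_smooth_le (hP : IncrementLaw P Δ g) (hg : Integrable g)
    (hg5 : G5 g) (hK : Integrable K) (hh : 0 < h) (hΔ : 0 < Δ) (hn : n ≠ 0) (x : ℝ) :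
    |mghat K h Δ n P x - smooth K h g x| ≤ nsup (deriv g) * nl1 g * nl1 K * Δ := by
  have hgC := abs_le_nl1_add_of_lipschitzWith hg5.lipschitzWith hg
  have hM : 0 ≤ nsup (deriv g) := Real.iSup_nonneg fun _ => abs_nonneg _
  have hK0 : 0 ≤ nl1 K := integral_nonneg fun _ => abs_nonneg _
  rw [hP.mghat_eq_integral_smooth hg hgC hK hh hΔ.ne' hn]
  refine (abs_integral_comp_sub_sub_le (lipschitzWith_smooth hK hg5.lipschitzWith hgC h)
    (hP.integrable_id hg) x).trans ?_
  rw [NNReal.coe_mul, Real.coe_toNNReal _ hM, Real.coe_toNNReal _ hK0]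
  calc nsup (deriv g) * nl1 K * ∫ z, |z| ∂P
      ≤ nsup (deriv g) * nl1 K * (|Δ| * nl1 g) := by gcongr; exact hP.integral_abs_le hg
    _ = nsup (deriv g) * nl1 g * nl1 K * Δ := by rw [abs_of_pos hΔ]; ring

lemma G3.integrable (hg3 : G3 1 g) (hg : Continuous g) : Integrable g := by
  refine (integrable_norm_iff hg.aestronglyMeasurable).1 ?_
  simpa [G3] using hg3

lemma K2.kernelOrder {α β : ℝ} (hK : K2 α K) (hβα : β ≤ α) : KernelOrder (hfloor β) K :=
  hK.1.mono (hfloor_mono hβα)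

lemma IncrementLaw.abs_mghat_sub_le {α β L : ℝ} (hβ : 0 < β) (hβα : β ≤ α) (hg3 : G3 1 g)
    (hg4 : Holder β L g) (hg5 : G5 g) (hK : K2 α K) (hh : 0 < h) (hΔ : 0 < Δ) (hn : n ≠ 0)
    (hP : IncrementLaw P Δ g) (x : ℝ) :
    |mghat K h Δ n P x - g x| ≤
      L / ((hfloor β).factorial : ℝ) * (∫ v, |K v| * |v| ^ β) * h ^ β +
        nsup (deriv g) * nl1 g * nl1 K * Δ := by
  have hg := hg3.integrable hg5.1.continuous
  have hKi := hK.1.integrable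
  have hbias := abs_smooth_sub_self_le hβ hg4
    (abs_le_nl1_add_of_lipschitzWith hg5.lipschitzWith hg) (hK.kernelOrder hβα)
    (integrable_abs_mul_rpow hKi hK.2 hβ.le hβα) hh.le x
  rw [add_comm]
  exact (abs_sub_le _ (smooth K h g x) _).trans
    (add_le_add (hP.abs_mghat_sub_smooth_le hg hg5 hKi hh hΔ hn x) hbias)

theorem bias_bound_general {α β L : ℝ} (hβ : 0 < β) (hβα : β ≤ α) (hg3 : G3 1 g)
    (hg4 : Holder β L g) (hg5 : G5 g) (hK : K2 α K) (hh : 0 < h) (hΔ : 0 < Δ) (hn : 1 ≤ n)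
    (hP : IncrementLaw P Δ g) (x₀ : ℝ) :
    (mghat K h Δ n P x₀ - g x₀) ^ 2 ≤ c1 K β L * h ^ (2 * β) + c1' K g * Δ ^ 2 := by
  set A := L / ((hfloor β).factorial : ℝ) * ∫ v, |K v| * |v| ^ β
  set B := nsup (deriv g) * nl1 g * nl1 K
  have hbound : |mghat K h Δ n P x₀ - g x₀| ≤ A * h ^ β + B * Δ :=
    hP.abs_mghat_sub_le hβ hβα hg3 hg4 hg5 hK hh hΔ (Nat.one_le_iff_ne_zero.1 hn) x₀
  have hpow : (h ^ β) ^ 2 = h ^ (2 * β) := by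
    rw [mul_comm, rpow_mul hh.le, rpow_two]
  calc (mghat K h Δ n P x₀ - g x₀) ^ 2
      ≤ (A * h ^ β + B * Δ) ^ 2 := sq_le_sq' (abs_le.1 hbound).1 (abs_le.1 hbound).2
    _ ≤ 2 * ((A * h ^ β) ^ 2 + (B * Δ) ^ 2) := add_sq_le
    _ = 2 * A ^ 2 * h ^ (2 * β) + 2 * B ^ 2 * Δ ^ 2 := by rw [← hpow]; ring
    _ ≤ 2 * A ^ 2 * h ^ (2 * β) + 2 * (2 * B) ^ 2 * Δ ^ 2 := by
        nlinarith [sq_nonneg (B * Δ)]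
    _ = c1 K β L * h ^ (2 * β) + c1' K g * Δ ^ 2 := by
        rw [c1, c1']
        ring

end Estimator

/-- Lemma 3.1 (bias bound). -/
theorem bias_bound (g K : ℝ → ℝ) (β L α x₀ : ℝ) (hx₀ : x₀ ≠ 0)
    (hβ : 0 < β) (hL : 0 < L) (hβα : β ≤ α)
    (hG3 : G3 1 g) (hG4 : Holder β L g) (hG5 : G5 g)
    (hK1 : K1 K) (hK2 : K2 α K)
    (h Δ : ℝ) (hh : 0 < h) (hΔ : 0 < Δ) (n : ℕ) (hn : 1 ≤ n)
    (P : Measure ℝ) [IsProbabilityMeasure P] (hP : IncrementLaw P Δ g) :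
    (mghat K h Δ n P x₀ - g x₀) ^ 2 ≤ c1 K β L * h ^ (2 * β) + c1' K g * Δ ^ 2 :=
  bias_bound_general hβ hβα hG3 hG4 hG5 hK2 hh hΔ hn hP x₀

end LevyAdapt
end
end

section
/- Moments of increments: let g(x) = xN(x) be the function associated with a Lévy density N, P_Δ the distribution with characteristic function exp(Δ ∫ (e^{iux} − 1) N(x) dx), and Z₁^Δ a random variable with law P_Δ. If p ≥ 1 is an integer with ∫_ℝ |x|^{p−1} |g(x)| dx < ∞, then E[|Z₁^Δ|^p] < ∞ and E[(Z₁^Δ)^p] = Δ ∫_ℝ x^{p−1} g(x) dx + o(Δ) as Δ → 0. Moreover, if g is integrable then E[|Z₁^Δ|] ≤ 2Δ ‖g‖₁. -/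
open MeasureTheory Real Filter Finset Asymptotics
open scoped Topology

noncomputable section

namespace LevyAdapt

/-!
Differentiating `ψ_Δ(u) = exp(Δ ∫ (e^{iux} - 1) N(x) dx)` gives `ψ_Δ' = i Δ g* ψ_Δ`, which is the
Fourier form of the size-biasing identity `x P_Δ(dx) = Δ (g ∗ P_Δ)(dx)`. As `P_Δ` is not known
beforehand to have a first moment, the left-hand side need not be a finite measure; averaging
`ψ_Δ` over Gaussian shifts of the frequency multiplies both sides by `exp(-x²/2)`, after which
uniqueness of characteristic functions applies and the Gaussian weight can be divided out again.

Testing the identity against truncations of `x ^ k`, with the sign chosen to produce absolute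
values, yields the moments of order `k + 1` from those of order at most `k`, and for `k = 0` the
bound `E|Z| ≤ Δ ‖g‖₁`. Tested against `x ^ k` itself and expanded by the binomial theorem, it
becomes a recursion whose main term is `Δ ∫ x ^ k g(x) dx` and whose other terms are `O(Δ²)`.
-/

section WeightedCharFun

variable {α β : Type*} [MeasurableSpace α] [MeasurableSpace β] {μ : Measure α} {ν : Measure β}
  {S : α → ℝ} {T : β → ℝ} {f : α → ℝ} {h : β → ℝ}

/-- The characteristic function of the image under `T` of the signed measure `w μ`. Carrying the
pair `(T, w)` instead of the image measure avoids signed measures and their Jordan decompositions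
in all Fourier computations. -/
def weightedCharFun (μ : Measure α) (T w : α → ℝ) (u : ℝ) : ℂ :=
  ∫ a, Complex.exp ((u * T a : ℝ) * Complex.I) * (w a : ℂ) ∂μ

/-- The image under `T` of the positive part of the signed measure `w μ`; its negative part is
`positivePartMap μ T (-w)`. -/
def positivePartMap (μ : Measure α) (T w : α → ℝ) : Measure ℝ :=
  (μ.withDensity fun a => ENNReal.ofReal (w a)).map T

lemma integrable_exp_mul (hS : Measurable S) (hf : Integrable f μ) (u : ℝ) :
    Integrable (fun a => Complex.exp ((u * S a : ℝ) * Complex.I) * (f a : ℂ)) μ :=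
  hf.ofReal.bdd_mul (c := 1) (by fun_prop)
    (Eventually.of_forall fun a => (Complex.norm_exp_ofReal_mul_I _).le)

lemma norm_weightedCharFun_le (u : ℝ) : ‖weightedCharFun μ S f u‖ ≤ ∫ a, |f a| ∂μ :=
  (norm_integral_le_integral_norm _).trans_eq <| by
    simp only [norm_mul, Complex.norm_exp_ofReal_mul_I, one_mul, Complex.norm_real, norm_eq_abs]

lemma weightedCharFun_const_mul (c u : ℝ) :
    weightedCharFun μ S (fun a => c * f a) u = c * weightedCharFun μ S f u := by
  rw [weightedCharFun, weightedCharFun, ← integral_const_mul]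
  congr! 2
  push_cast
  ring

lemma weightedCharFun_mul_weightedCharFun [SFinite μ] [SFinite ν] (u : ℝ) :
    weightedCharFun μ S f u * weightedCharFun ν T h u =
      weightedCharFun (μ.prod ν) (fun z => S z.1 + T z.2) (fun z => f z.1 * h z.2) u := by
  rw [weightedCharFun, weightedCharFun, ← integral_prod_mul, weightedCharFun]
  congr! 2
  push_cast
  rw [mul_mul_mul_comm, ← Complex.exp_add]
  ring_nf

lemma isFiniteMeasure_positivePartMap (hf : Integrable f μ) :
    IsFiniteMeasure (positivePartMap μ S f) := by
  have := isFiniteMeasure_withDensity_ofReal hf.2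
  unfold positivePartMap
  infer_instance

lemma integrable_positivePartMap_iff {E : Type*} [NormedAddCommGroup E] [NormedSpace ℝ E]
    {φ : ℝ → E} (hS : Measurable S) (hf : AEMeasurable f μ) (hφ : StronglyMeasurable φ) :
    Integrable φ (positivePartMap μ S f) ↔ Integrable (fun a => max (f a) 0 • φ (S a)) μ := by
  rw [positivePartMap, integrable_map_measure hφ.aestronglyMeasurable hS.aemeasurable,
    integrable_withDensity_iff_integrable_smul₀' hf.ennreal_ofReal (by simp)]
  simp only [ENNReal.toReal_ofReal', Function.comp_apply]

lemma integrable_positivePartMap {E : Type*} [NormedAddCommGroup E] [NormedSpace ℝ E]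
    {φ : ℝ → E} (hS : Measurable S) (hf : AEMeasurable f μ) (hφ : StronglyMeasurable φ)
    (hfφ : Integrable (fun a => f a • φ (S a)) μ) : Integrable φ (positivePartMap μ S f) := by
  rw [integrable_positivePartMap_iff hS hf hφ]
  refine hfφ.mono ((hf.max aemeasurable_const).aestronglyMeasurable.smul
    (hφ.comp_measurable hS).aestronglyMeasurable) (Eventually.of_forall fun a => ?_)
  rw [norm_smul, norm_smul, norm_eq_abs, norm_eq_abs, abs_of_nonneg (le_max_right _ _)]
  gcongr
  exact max_le (le_abs_self _) (abs_nonneg _)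

lemma integral_positivePartMap {E : Type*} [NormedAddCommGroup E] [NormedSpace ℝ E] {φ : ℝ → E}
    (hS : Measurable S) (hf : AEMeasurable f μ) (hφ : StronglyMeasurable φ) :
    ∫ x, φ x ∂(positivePartMap μ S f) = ∫ a, max (f a) 0 • φ (S a) ∂μ := by
  rw [positivePartMap, integral_map hS.aemeasurable hφ.aestronglyMeasurable,
    integral_withDensity_eq_integral_toReal_smul₀ hf.ennreal_ofReal (by simp)]
  simp only [ENNReal.toReal_ofReal']

lemma integrable_positivePartMap_neg {E : Type*} [NormedAddCommGroup E] [NormedSpace ℝ E]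
    {φ : ℝ → E} (hS : Measurable S) (hf : AEMeasurable f μ) (hφ : StronglyMeasurable φ)
    (hfφ : Integrable (fun a => f a • φ (S a)) μ) : Integrable φ (positivePartMap μ S (-f)) :=
  integrable_positivePartMap hS hf.neg hφ <| hfφ.neg.congr <|
    Eventually.of_forall fun a => (neg_smul (f a) (φ (S a))).symm

lemma integral_positivePartMap_sub_neg {E : Type*} [NormedAddCommGroup E] [NormedSpace ℝ E]
    {φ : ℝ → E} (hS : Measurable S) (hf : AEMeasurable f μ) (hφ : StronglyMeasurable φ)
    (hfφ : Integrable (fun a => f a • φ (S a)) μ) :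
    ∫ x, φ x ∂(positivePartMap μ S f) - ∫ x, φ x ∂(positivePartMap μ S (-f)) =
      ∫ a, f a • φ (S a) ∂μ := by
  rw [integral_positivePartMap hS hf hφ, integral_positivePartMap hS hf.neg hφ, ← integral_sub
    ((integrable_positivePartMap_iff hS hf hφ).1 (integrable_positivePartMap hS hf hφ hfφ))
    ((integrable_positivePartMap_iff hS hf.neg hφ).1
      (integrable_positivePartMap_neg hS hf hφ hfφ))]
  refine integral_congr_ae (Eventually.of_forall fun a => ?_)
  simp only [Pi.neg_apply, ← sub_smul]
  rw [max_zero_sub_max_neg_zero_eq_self]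

lemma charFun_positivePartMap_sub_neg (hS : Measurable S) (hf : Integrable f μ) (u : ℝ) :
    charFun (positivePartMap μ S f) u - charFun (positivePartMap μ S (-f)) u =
      weightedCharFun μ S f u := by
  have key := integral_positivePartMap_sub_neg (φ := fun x => Complex.exp ((u * x : ℝ) * Complex.I))
    hS hf.aemeasurable (by fun_prop)
    (by simpa only [mul_comm, Complex.real_smul] using integrable_exp_mul hS hf u)
  simp only [charFun_apply_real, weightedCharFun]
  simpa only [mul_comm, Complex.real_smul, Complex.ofReal_mul] using key

lemma charFun_add_measure {E : Type*} [SeminormedAddCommGroup E] [InnerProductSpace ℝ E]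
    [MeasurableSpace E] [OpensMeasurableSpace E] (ρ σ : Measure E) [IsFiniteMeasure ρ]
    [IsFiniteMeasure σ] (t : E) : charFun (ρ + σ) t = charFun ρ t + charFun σ t := by
  simp only [charFun_eq_integral_innerProbChar]
  exact integral_add_measure (BoundedContinuousFunction.integrable ρ _)
    (BoundedContinuousFunction.integrable σ _)

/-- The Jordan decompositions cannot be compared directly; adding the negative parts to the other
side turns equality of signed measures into equality of finite measures. -/
lemma integral_mul_comp_eq_of_weightedCharFun_eq (hS : Measurable S) (hT : Measurable T)
    (hf : Integrable f μ) (hh : Integrable h ν)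
    (heq : ∀ u, weightedCharFun μ S f u = weightedCharFun ν T h u) {φ : ℝ → ℝ} (hφ : Measurable φ)
    (hfφ : Integrable (fun a => f a * φ (S a)) μ) (hhφ : Integrable (fun b => h b * φ (T b)) ν) :
    ∫ a, f a * φ (S a) ∂μ = ∫ b, h b * φ (T b) ∂ν := by
  have := isFiniteMeasure_positivePartMap (S := S) hf
  have := isFiniteMeasure_positivePartMap (S := S) hf.neg
  have := isFiniteMeasure_positivePartMap (S := T) hh
  have := isFiniteMeasure_positivePartMap (S := T) hh.neg
  have hmeasure : positivePartMap μ S f + positivePartMap ν T (-h) =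
      positivePartMap ν T h + positivePartMap μ S (-f) := by
    refine Measure.ext_of_charFun (funext fun u => ?_)
    have key := heq u
    rw [← charFun_positivePartMap_sub_neg hS hf, ← charFun_positivePartMap_sub_neg hT hh] at key
    rw [charFun_add_measure, charFun_add_measure]
    linear_combination key
  have hint : ∫ x, φ x ∂(positivePartMap μ S f + positivePartMap ν T (-h)) =
      ∫ x, φ x ∂(positivePartMap ν T h + positivePartMap μ S (-f)) := by rw [hmeasure]
  have hφs := hφ.stronglyMeasurable
  rw [integral_add_measure (integrable_positivePartMap hS hf.aemeasurable hφs hfφ)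
      (integrable_positivePartMap_neg hT hh.aemeasurable hφs hhφ),
    integral_add_measure (integrable_positivePartMap hT hh.aemeasurable hφs hhφ)
      (integrable_positivePartMap_neg hS hf.aemeasurable hφs hfφ)] at hint
  have hfsub := integral_positivePartMap_sub_neg hS hf.aemeasurable hφs hfφ
  have hhsub := integral_positivePartMap_sub_neg hT hh.aemeasurable hφs hhφ
  simp only [smul_eq_mul] at hfsub hhsub
  rw [← hfsub, ← hhsub]
  linear_combination hint

lemma integrable_exp_sub_one_mul (hS : Measurable S) (hf : AEMeasurable f μ)
    (hSf : Integrable (fun a => S a * f a) μ) (u : ℝ) :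
    Integrable (fun a => (Complex.exp ((u * S a : ℝ) * Complex.I) - 1) * (f a : ℂ)) μ := by
  refine (hSf.norm.const_mul |u|).mono' (AEMeasurable.aestronglyMeasurable (by fun_prop))
    (Eventually.of_forall fun a => ?_)
  calc ‖(Complex.exp ((u * S a : ℝ) * Complex.I) - 1) * (f a : ℂ)‖
      ≤ |u * S a| * |f a| := by
        rw [norm_mul, Complex.norm_real, mul_comm _ Complex.I]
        exact mul_le_mul_of_nonneg_right norm_exp_I_mul_ofReal_sub_one_le (norm_nonneg _)
    _ = |u| * ‖S a * f a‖ := by rw [norm_eq_abs, abs_mul, abs_mul, mul_assoc]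

lemma hasDerivAt_integral_exp_sub_one_mul (hS : Measurable S) (hf : AEMeasurable f μ)
    (hSf : Integrable (fun a => S a * f a) μ) (u : ℝ) :
    HasDerivAt (fun v : ℝ => ∫ a, (Complex.exp ((v * S a : ℝ) * Complex.I) - 1) * (f a : ℂ) ∂μ)
      (Complex.I * weightedCharFun μ S (fun a => S a * f a) u) u := by
  rw [weightedCharFun, ← integral_const_mul]
  refine (hasDerivAt_integral_of_dominated_loc_of_deriv_le univ_mem
    (bound := fun a => ‖S a * f a‖)
    (F' := fun v a => Complex.I * (Complex.exp ((v * S a : ℝ) * Complex.I) * ((S a * f a : ℝ) : ℂ)))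
    (Eventually.of_forall fun v => AEMeasurable.aestronglyMeasurable (by fun_prop))
    (integrable_exp_sub_one_mul hS hf hSf u)
    (AEMeasurable.aestronglyMeasurable (by fun_prop))
    (Eventually.of_forall fun a v _ => ?_) hSf.norm (Eventually.of_forall fun a v _ => ?_)).2
  · rw [norm_mul, norm_mul, Complex.norm_exp_ofReal_mul_I, Complex.norm_I, Complex.norm_real,
      one_mul, one_mul]
  · have harg : HasDerivAt (fun v : ℝ => ((v * S a : ℝ) : ℂ) * Complex.I) (S a * Complex.I) v := by
      simpa using ((hasDerivAt_mul_const (S a)).ofReal_comp (z := v)).mul_const Complex.I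
    convert! (harg.cexp.sub_const 1).mul_const (f a : ℂ) using 1
    push_cast
    ring

lemma hasDerivAt_weightedCharFun (hS : Measurable S) (hf : Integrable f μ)
    (hSf : Integrable (fun a => S a * f a) μ) (u : ℝ) :
    HasDerivAt (weightedCharFun μ S f)
      (Complex.I * weightedCharFun μ S (fun a => S a * f a) u) u := by
  convert! (hasDerivAt_integral_exp_sub_one_mul hS hf.aemeasurable hSf u).add_const
    (∫ a, (f a : ℂ) ∂μ) using 1
  funext v
  refine Eq.trans ?_ (integral_add (integrable_exp_sub_one_mul hS hf.aemeasurable hSf v) hf.ofReal)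
  exact integral_congr_ae (Eventually.of_forall fun a => by simp [sub_mul])

lemma hasDerivAt_integral_comp_add {E : Type*} [NormedAddCommGroup E] [NormedSpace ℝ E]
    [CompleteSpace E] {γ : Measure ℝ} [IsFiniteMeasure γ] {F F' : ℝ → E} {C D : ℝ}
    (hF : ∀ v, HasDerivAt F (F' v) v) (hC : ∀ v, ‖F v‖ ≤ C) (hD : ∀ v, ‖F' v‖ ≤ D) (u : ℝ) :
    HasDerivAt (fun v => ∫ s, F (v + s) ∂γ) (∫ s, F' (u + s) ∂γ) u := by
  have hFc : Continuous F := continuous_iff_continuousAt.2 fun v => (hF v).continuousAt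
  have hF' : F' = deriv F := funext fun v => (hF v).deriv.symm
  refine (hasDerivAt_integral_of_dominated_loc_of_deriv_le univ_mem (bound := fun _ => D)
    (F' := fun v s => F' (v + s))
    (Eventually.of_forall fun v => (hFc.comp (continuous_const_add v)).aestronglyMeasurable)
    (Integrable.of_bound (hFc.comp (continuous_const_add u)).aestronglyMeasurable C
      (Eventually.of_forall fun s => hC _)) ?_
    (Eventually.of_forall fun s v _ => hD _) (integrable_const D)
    (Eventually.of_forall fun s v _ => (hF (v + s)).comp_add_const v s)).2
  rw [hF']
  exact ((stronglyMeasurable_deriv F).comp_measurable (measurable_const_add u)).aestronglyMeasurable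

/-- `f` damped by the Gaussian weight `exp(-S²/2)`, which makes all its moments along `S` finite. -/
def gaussianDamp (S f : α → ℝ) (a : α) : ℝ := Real.exp (-S a ^ 2 / 2) * f a

open ProbabilityTheory in
lemma integral_weightedCharFun_add_gaussianReal [SFinite μ] (hS : Measurable S)
    (hf : Integrable f μ) (u : ℝ) :
    ∫ s, weightedCharFun μ S f (u + s) ∂(gaussianReal 0 1) =
      weightedCharFun μ S (gaussianDamp S f) u := by
  have hint : Integrable
      (fun z : ℝ × α => Complex.exp (((u + z.1) * S z.2 : ℝ) * Complex.I) * (f z.2 : ℂ))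
      ((gaussianReal 0 1).prod μ) :=
    ((hf.ofReal (𝕜 := ℂ)).comp_snd (gaussianReal 0 1)).bdd_mul (c := 1) (by fun_prop)
      (Eventually.of_forall fun z => (Complex.norm_exp_ofReal_mul_I _).le)
  simp only [weightedCharFun]
  rw [integral_integral_swap hint]
  refine integral_congr_ae (Eventually.of_forall fun a => ?_)
  calc ∫ s, Complex.exp (((u + s) * S a : ℝ) * Complex.I) * (f a : ℂ) ∂(gaussianReal 0 1)
      = Complex.exp ((u * S a : ℝ) * Complex.I) * charFun (gaussianReal 0 1) (S a) * f a := by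
        rw [charFun_apply_real, ← integral_const_mul, ← integral_mul_const]
        congr! 3
        rw [← Complex.exp_add]
        push_cast
        ring_nf
    _ = Complex.exp ((u * S a : ℝ) * Complex.I) * (gaussianDamp S f a : ℂ) := by
        rw [gaussianDamp, charFun_gaussianReal]
        push_cast
        ring_nf

lemma integrable_gaussianDamp (hS : Measurable S) (hf : Integrable f μ) :
    Integrable (gaussianDamp S f) μ :=
  hf.bdd_mul (c := 1) (by fun_prop) (Eventually.of_forall fun a => by
    rw [norm_eq_abs, Real.abs_exp]
    exact Real.exp_le_one_iff.2 (by nlinarith [sq_nonneg (S a)]))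

lemma abs_mul_exp_neg_sq_div_two_le (x : ℝ) : |x| * Real.exp (-x ^ 2 / 2) ≤ 1 := by
  have hx : |x| ≤ Real.exp (x ^ 2 / 2) := by
    have := Real.add_one_le_exp (x ^ 2 / 2)
    nlinarith [sq_nonneg (|x| - 1), sq_abs x]
  rw [neg_div, Real.exp_neg, ← div_eq_mul_inv]
  exact div_le_one_of_le₀ hx (Real.exp_pos _).le

lemma integrable_mul_gaussianDamp (hS : Measurable S) (hf : Integrable f μ) :
    Integrable (fun a => S a * gaussianDamp S f a) μ := by
  simp only [gaussianDamp, ← mul_assoc]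
  refine hf.bdd_mul (c := 1) (by fun_prop) (Eventually.of_forall fun a => ?_)
  rw [norm_mul, norm_eq_abs, norm_eq_abs, Real.abs_exp]
  exact abs_mul_exp_neg_sq_div_two_le _

lemma weightedCharFun_mul_gaussianDamp [SFinite μ] [SFinite ν] (hS : Measurable S)
    (hT : Measurable T) (hf : Integrable f μ) (hh : Integrable h ν)
    (hderiv : ∀ u, HasDerivAt (weightedCharFun μ S f) (Complex.I * weightedCharFun ν T h u) u)
    (u : ℝ) :
    weightedCharFun μ S (fun a => S a * gaussianDamp S f a) u =
      weightedCharFun ν T (gaussianDamp T h) u := by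
  have hdamp := hasDerivAt_weightedCharFun hS (integrable_gaussianDamp hS hf)
    (integrable_mul_gaussianDamp hS hf) u
  have haverage := hasDerivAt_integral_comp_add (γ := ProbabilityTheory.gaussianReal 0 1) hderiv
    norm_weightedCharFun_le (D := ∫ b, |h b| ∂ν)
    (fun v => by
      rw [norm_mul, Complex.norm_I, one_mul]
      exact norm_weightedCharFun_le v) u
  simp only [integral_const_mul, integral_weightedCharFun_add_gaussianReal hT hh,
    integral_weightedCharFun_add_gaussianReal hS hf] at haverage
  exact mul_left_cancel₀ Complex.I_ne_zero (hdamp.unique haverage)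

/-- Differentiating a Fourier transform multiplies the measure by the identity, even when the first
moment of the measure is not known to exist. -/
lemma integral_mul_comp_eq_of_hasDerivAt [SFinite μ] [SFinite ν] (hS : Measurable S)
    (hT : Measurable T) (hf : Integrable f μ) (hh : Integrable h ν)
    (hderiv : ∀ u, HasDerivAt (weightedCharFun μ S f) (Complex.I * weightedCharFun ν T h u) u)
    {φ : ℝ → ℝ} (hφ : Measurable φ) (hfφ : Integrable (fun a => S a * f a * φ (S a)) μ)
    (hhφ : Integrable (fun b => h b * φ (T b)) ν) :
    ∫ a, S a * f a * φ (S a) ∂μ = ∫ b, h b * φ (T b) ∂ν := by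
  have hcancel (x : ℝ) : Real.exp (-x ^ 2 / 2) * Real.exp (x ^ 2 / 2) = 1 := by
    rw [← Real.exp_add, neg_div, neg_add_cancel, Real.exp_zero]
  have hf_eq (a : α) : S a * gaussianDamp S f a * (Real.exp (S a ^ 2 / 2) * φ (S a)) =
      S a * f a * φ (S a) := by
    rw [gaussianDamp]
    linear_combination S a * f a * φ (S a) * hcancel (S a)
  have hh_eq (b : β) : gaussianDamp T h b * (Real.exp (T b ^ 2 / 2) * φ (T b)) =
      h b * φ (T b) := by
    rw [gaussianDamp]
    linear_combination h b * φ (T b) * hcancel (T b)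
  have key := integral_mul_comp_eq_of_weightedCharFun_eq hS hT
    (integrable_mul_gaussianDamp hS hf) (integrable_gaussianDamp hT hh)
    (weightedCharFun_mul_gaussianDamp hS hT hf hh hderiv)
    (φ := fun x => Real.exp (x ^ 2 / 2) * φ x) (by fun_prop)
    (by simpa only [hf_eq] using hfφ) (by simpa only [hh_eq] using hhφ)
  simpa only [hf_eq, hh_eq] using key

end WeightedCharFun

section BinomialMoments

variable {μ ν : Measure ℝ} {f : ℝ → ℝ} {k : ℕ}

lemma mul_add_pow_eq_sum (c x y : ℝ) (k : ℕ) :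
    c * (x + y) ^ k = ∑ m ∈ range (k + 1), x ^ m * c * y ^ (k - m) * (k.choose m : ℝ) := by
  rw [add_pow, mul_sum]
  exact sum_congr rfl fun m _ => by ring

lemma integrable_pow_mul_mul_pow_sub [SFinite ν]
    (hf : ∀ m ≤ k, Integrable (fun x => x ^ m * f x) μ)
    (hν : ∀ m ≤ k, Integrable (fun y => y ^ m) ν) {m : ℕ} (hm : m ∈ range (k + 1)) :
    Integrable (fun z : ℝ × ℝ => z.1 ^ m * f z.1 * z.2 ^ (k - m) * (k.choose m : ℝ))
      (μ.prod ν) :=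
  ((hf m (mem_range_succ_iff.1 hm)).mul_prod (hν (k - m) (Nat.sub_le k m))).mul_const _

lemma integrable_mul_add_pow_prod [SFinite ν]
    (hf : ∀ m ≤ k, Integrable (fun x => x ^ m * f x) μ)
    (hν : ∀ m ≤ k, Integrable (fun y => y ^ m) ν) :
    Integrable (fun z : ℝ × ℝ => f z.1 * (z.1 + z.2) ^ k) (μ.prod ν) := by
  simp only [mul_add_pow_eq_sum]
  exact integrable_finsetSum _ fun m hm => integrable_pow_mul_mul_pow_sub hf hν hm

lemma integral_mul_add_pow_prod [SFinite μ] [SFinite ν]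
    (hf : ∀ m ≤ k, Integrable (fun x => x ^ m * f x) μ)
    (hν : ∀ m ≤ k, Integrable (fun y => y ^ m) ν) :
    ∫ z : ℝ × ℝ, f z.1 * (z.1 + z.2) ^ k ∂(μ.prod ν) =
      ∑ m ∈ range (k + 1), (∫ x, x ^ m * f x ∂μ) * (∫ y, y ^ (k - m) ∂ν) * k.choose m := by
  simp only [mul_add_pow_eq_sum]
  rw [integral_finsetSum _ fun m hm => integrable_pow_mul_mul_pow_sub hf hν hm]
  refine sum_congr rfl fun m _ => ?_
  rw [integral_mul_const, integral_prod_mul (fun x => x ^ m * f x) fun y => y ^ (k - m)]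

end BinomialMoments

lemma aemeasurable_of_id_mul {μ : Measure ℝ} [NullSingletonClass μ] {N : ℝ → ℝ}
    (hN : AEMeasurable (fun x => x * N x) μ) : AEMeasurable N μ := by
  refine (measurable_inv.aemeasurable.mul hN).congr ?_
  filter_upwards [Measure.ae_ne μ 0] with x hx
  exact inv_mul_cancel_left₀ hx (N x)

section Domination

variable {α : Type*} [MeasurableSpace α] {μ : Measure α} {T f : α → ℝ} {φ ψ : ℝ → ℝ}

lemma integrable_mul_comp_of_abs_le (hf : AEStronglyMeasurable f μ) (hT : Measurable T)
    (hψ : Measurable ψ) (hle : ∀ x, |ψ x| ≤ |φ x|) (hfφ : Integrable (fun a => f a * φ (T a)) μ) :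
    Integrable (fun a => f a * ψ (T a)) μ :=
  hfφ.mono (hf.mul (hψ.comp hT).aestronglyMeasurable) (Eventually.of_forall fun a => by
    rw [norm_mul, norm_mul]
    exact mul_le_mul_of_nonneg_left (hle _) (norm_nonneg _))

lemma integral_abs_mul_comp_le_of_abs_le (hle : ∀ x, |ψ x| ≤ |φ x|)
    (hfφ : Integrable (fun a => f a * φ (T a)) μ) :
    ∫ a, |f a * ψ (T a)| ∂μ ≤ ∫ a, |f a * φ (T a)| ∂μ :=
  integral_mono_of_nonneg (Eventually.of_forall fun a => abs_nonneg _) hfφ.abs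
    (Eventually.of_forall fun a => by
      simp only [abs_mul]
      exact mul_le_mul_of_nonneg_left (hle _) (abs_nonneg _))

end Domination

namespace IncrementLawN

variable {N : ℝ → ℝ} {P : Measure ℝ} {Δ : ℝ}

lemma weightedCharFun_one (hP : IncrementLawN P Δ N) (u : ℝ) :
    weightedCharFun P id (fun _ => 1) u =
      Complex.exp (Δ * ∫ x : ℝ, (Complex.exp ((u * x : ℝ) * Complex.I) - 1) * (N x : ℂ)) := by
  have harg (x : ℝ) : ((u * x : ℝ) : ℂ) * Complex.I = Complex.I * u * x := by push_cast; ring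
  simpa only [weightedCharFun, harg, id, Complex.ofReal_one, mul_one] using hP u

lemma hasDerivAt_weightedCharFun_one [SFinite P] (hN : Integrable fun x => x * N x)
    (hP : IncrementLawN P Δ N) (u : ℝ) :
    HasDerivAt (weightedCharFun P id fun _ => 1)
      (Complex.I * weightedCharFun (volume.prod P) (fun z => z.1 + z.2)
        (fun z => Δ * (z.1 * N z.1)) u) u := by
  have hprod : weightedCharFun (volume.prod P) (fun z => z.1 + z.2) (fun z => Δ * (z.1 * N z.1)) u =
      Δ * (weightedCharFun volume id (fun x => x * N x) u *
        weightedCharFun P id (fun _ => 1) u) := by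
    rw [weightedCharFun_const_mul, weightedCharFun_mul_weightedCharFun]
    simp only [id, mul_one]
  have hexponent := hasDerivAt_integral_exp_sub_one_mul measurable_id
    (aemeasurable_of_id_mul hN.aemeasurable) hN u
  have hexp := (hexponent.const_mul (Δ : ℂ)).cexp
  rw [hprod, hP.weightedCharFun_one, funext hP.weightedCharFun_one]
  convert! hexp using 1
  simp only [id]
  ring

variable [IsProbabilityMeasure P] {φ : ℝ → ℝ}

/-- The size-biasing identity `x P(dx) = Δ (g ∗ P)(dx)`, tested against `φ`. -/
lemma integral_id_mul (hN : Integrable fun x => x * N x) (hP : IncrementLawN P Δ N)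
    (hφ : Measurable φ) (hφP : Integrable (fun x => x * φ x) P)
    (hφN : Integrable (fun z : ℝ × ℝ => z.1 * N z.1 * φ (z.1 + z.2)) (volume.prod P)) :
    ∫ x, x * φ x ∂P = Δ * ∫ z : ℝ × ℝ, z.1 * N z.1 * φ (z.1 + z.2) ∂(volume.prod P) := by
  have key := integral_mul_comp_eq_of_hasDerivAt measurable_id measurable_add
    (integrable_const 1) ((hN.comp_fst P).const_mul Δ) (hP.hasDerivAt_weightedCharFun_one hN) hφ
    (by simpa only [id, mul_one] using hφP) (by simpa only [mul_assoc] using hφN.const_mul Δ)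
  simpa only [id, mul_one, mul_assoc, integral_const_mul] using key

lemma integral_abs_id_mul_le_of_integrable (hN : Integrable fun x => x * N x)
    (hP : IncrementLawN P Δ N) (hφ : Measurable φ) (hφP : Integrable (fun x => x * φ x) P)
    (hφN : Integrable (fun z : ℝ × ℝ => z.1 * N z.1 * φ (z.1 + z.2)) (volume.prod P)) :
    ∫ x, |x * φ x| ∂P ≤ |Δ| * ∫ z : ℝ × ℝ, |z.1 * N z.1 * φ (z.1 + z.2)| ∂(volume.prod P) := by
  -- `ψ` is `φ` with its sign changed so that `x * ψ x` becomes nonnegative.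
  set ψ : ℝ → ℝ := fun x => x⁻¹ * |x * φ x| with hψ
  have hψ_meas : Measurable ψ := by fun_prop
  have hψ_eq (x : ℝ) : x * ψ x = |x * φ x| := by
    rcases eq_or_ne x 0 with rfl | hx
    · simp
    · exact mul_inv_cancel_left₀ hx _
  have hψ_le (x : ℝ) : |ψ x| ≤ |φ x| := by
    rw [hψ, abs_mul, abs_abs, abs_mul, ← mul_assoc, ← abs_mul]
    exact mul_le_of_le_one_left (abs_nonneg _) (by rcases eq_or_ne x 0 with rfl | hx <;> simp [*])
  calc ∫ x, |x * φ x| ∂P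
      = Δ * ∫ z : ℝ × ℝ, z.1 * N z.1 * ψ (z.1 + z.2) ∂(volume.prod P) := by
        simp only [← hψ_eq]
        exact hP.integral_id_mul hN hψ_meas (by simpa only [hψ_eq] using hφP.abs)
          (integrable_mul_comp_of_abs_le (hN.comp_fst P).aestronglyMeasurable measurable_add
            hψ_meas hψ_le hφN)
    _ ≤ |Δ| * |∫ z : ℝ × ℝ, z.1 * N z.1 * ψ (z.1 + z.2) ∂(volume.prod P)| :=
        (le_abs_self _).trans_eq (abs_mul _ _)
    _ ≤ |Δ| * ∫ z : ℝ × ℝ, |z.1 * N z.1 * φ (z.1 + z.2)| ∂(volume.prod P) := by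
        gcongr
        exact abs_integral_le_integral_abs.trans (integral_abs_mul_comp_le_of_abs_le hψ_le hφN)

lemma integrable_id_mul (hN : Integrable fun x => x * N x) (hP : IncrementLawN P Δ N)
    (hφ : Measurable φ)
    (hφN : Integrable (fun z : ℝ × ℝ => z.1 * N z.1 * φ (z.1 + z.2)) (volume.prod P)) :
    Integrable (fun x => x * φ x) P := by
  set A : ℕ → Set ℝ := fun n => {x | |x * φ x| ≤ n}
  have hA (n : ℕ) : MeasurableSet (A n) := measurableSet_le (by fun_prop) measurable_const
  have hcover : AECover P atTop A :=
    ⟨Eventually.of_forall fun x => eventually_atTop.2 ⟨⌈|x * φ x|⌉₊, fun n hn =>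
      (Nat.le_ceil _).trans (Nat.cast_le.2 hn)⟩, hA⟩
  have hmul (n : ℕ) (x : ℝ) : x * (A n).indicator φ x = (A n).indicator (fun x => x * φ x) x :=
    (Set.indicator_mul_right (A n) (fun x => x) φ).symm
  have hle (n : ℕ) (x : ℝ) : |(A n).indicator φ x| ≤ |φ x| := norm_indicator_le_norm_self φ x
  have hintA (n : ℕ) : IntegrableOn (fun x => x * φ x) (A n) P :=
    Measure.integrableOn_of_bounded (measure_ne_top P _) (by fun_prop)
      (ae_restrict_of_forall_mem (hA n) fun x hx => hx)
  refine hcover.integrable_of_integral_norm_bounded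
    (|Δ| * ∫ z : ℝ × ℝ, |z.1 * N z.1 * φ (z.1 + z.2)| ∂(volume.prod P)) hintA
    (Eventually.of_forall fun n => ?_)
  calc ∫ x in A n, ‖x * φ x‖ ∂P = ∫ x, |x * (A n).indicator φ x| ∂P := by
        simp only [hmul, ← norm_eq_abs, norm_indicator_eq_indicator_norm]
        rw [integral_indicator (hA n)]
    _ ≤ |Δ| * ∫ z : ℝ × ℝ, |z.1 * N z.1 * (A n).indicator φ (z.1 + z.2)| ∂(volume.prod P) :=
        hP.integral_abs_id_mul_le_of_integrable hN (hφ.indicator (hA n))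
          (by simpa only [hmul] using (integrable_indicator_iff (hA n)).2 (hintA n))
          (integrable_mul_comp_of_abs_le (hN.comp_fst P).aestronglyMeasurable measurable_add
            (hφ.indicator (hA n)) (hle n) hφN)
    _ ≤ |Δ| * ∫ z : ℝ × ℝ, |z.1 * N z.1 * φ (z.1 + z.2)| ∂(volume.prod P) :=
        mul_le_mul_of_nonneg_left (integral_abs_mul_comp_le_of_abs_le (hle n) hφN) (abs_nonneg Δ)

lemma integral_abs_id_mul_le (hN : Integrable fun x => x * N x) (hP : IncrementLawN P Δ N)
    (hφ : Measurable φ)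
    (hφN : Integrable (fun z : ℝ × ℝ => z.1 * N z.1 * φ (z.1 + z.2)) (volume.prod P)) :
    ∫ x, |x * φ x| ∂P ≤ |Δ| * ∫ z : ℝ × ℝ, |z.1 * N z.1 * φ (z.1 + z.2)| ∂(volume.prod P) :=
  hP.integral_abs_id_mul_le_of_integrable hN hφ (hP.integrable_id_mul hN hφ hφN) hφN

lemma integral_abs_le (hN : Integrable fun x => x * N x) (hP : IncrementLawN P Δ N) :
    ∫ x, |x| ∂P ≤ |Δ| * nl1 fun x => x * N x := by
  have h := hP.integral_abs_id_mul_le hN (φ := fun _ => 1) measurable_const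
    (by simpa only [mul_one] using hN.comp_fst P)
  simpa only [mul_one, nl1, integral_fun_fst fun x => |x * N x|, probReal_univ, one_smul] using h

lemma integrable_pow {k : ℕ} (hP : IncrementLawN P Δ N)
    (hN : ∀ m < k, Integrable fun x => x ^ m * (x * N x)) : Integrable (fun x => x ^ k) P := by
  induction k using Nat.strong_induction_on with
  | _ k ih =>
    rcases k with _ | k
    · simp
    have hN0 : Integrable fun x => x * N x := by simpa using hN 0 k.succ_pos
    have hprod := integrable_mul_add_pow_prod (fun m hm => hN m (Nat.lt_succ_of_le hm))
      fun m hm => ih m (Nat.lt_succ_of_le hm) fun j hj => hN j (hj.trans (Nat.lt_succ_of_le hm))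
    simpa only [pow_succ'] using
      hP.integrable_id_mul hN0 (φ := fun x => x ^ k) (by fun_prop) hprod

lemma integral_pow_succ {k : ℕ} (hP : IncrementLawN P Δ N)
    (hN : ∀ m ≤ k, Integrable fun x => x ^ m * (x * N x)) :
    ∫ x, x ^ (k + 1) ∂P = Δ * ∑ m ∈ range (k + 1),
      (∫ x, x ^ m * (x * N x)) * (∫ x, x ^ (k - m) ∂P) * k.choose m := by
  have hN0 : Integrable fun x => x * N x := by simpa using hN 0 k.zero_le
  have hpow (m : ℕ) (hm : m ≤ k + 1) : Integrable (fun x => x ^ m) P :=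
    hP.integrable_pow fun j hj => hN j (by omega)
  have hpow_le (m : ℕ) (hm : m ≤ k) : Integrable (fun x => x ^ m) P := hpow m (by omega)
  rw [← integral_mul_add_pow_prod hN hpow_le, ← hP.integral_id_mul hN0 (φ := fun x => x ^ k)
    (by fun_prop) (by simpa only [pow_succ'] using hpow (k + 1) le_rfl)
    (integrable_mul_add_pow_prod hN hpow_le)]
  simp only [pow_succ']

end IncrementLawN

lemma integral_pow_succ_sub_eventuallyEq {N : ℝ → ℝ} {k : ℕ}
    (hN : ∀ m ≤ k, Integrable fun x => x ^ m * (x * N x)) {P : ℝ → Measure ℝ}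
    (hprob : ∀ Δ : ℝ, 0 < Δ → IsProbabilityMeasure (P Δ))
    (hP : ∀ Δ : ℝ, 0 < Δ → IncrementLawN (P Δ) Δ N) :
    (fun Δ => (∫ x, x ^ (k + 1) ∂(P Δ)) - Δ * ∫ x, x ^ k * (x * N x)) =ᶠ[𝓝[>] 0] fun Δ =>
      Δ * ∑ m ∈ range k, (∫ x, x ^ m * (x * N x)) * (∫ x, x ^ (k - m) ∂(P Δ)) * k.choose m := by
  filter_upwards [self_mem_nhdsWithin] with Δ hΔ
  have := hprob Δ hΔ
  rw [(hP Δ hΔ).integral_pow_succ hN, sum_range_succ]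
  simp [mul_add]

/-- In the recursion for the moment of order `k + 1`, every summand except the one giving the main
term contains a moment of positive order, which is `O(Δ)` by induction. -/
lemma isBigO_integral_pow_succ_sub {N : ℝ → ℝ} {k : ℕ}
    (hN : ∀ m ≤ k, Integrable fun x => x ^ m * (x * N x)) {P : ℝ → Measure ℝ}
    (hprob : ∀ Δ : ℝ, 0 < Δ → IsProbabilityMeasure (P Δ))
    (hP : ∀ Δ : ℝ, 0 < Δ → IncrementLawN (P Δ) Δ N) :
    (fun Δ => (∫ x, x ^ (k + 1) ∂(P Δ)) - Δ * ∫ x, x ^ k * (x * N x)) =O[𝓝[>] 0]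
      fun Δ => Δ ^ 2 := by
  induction k using Nat.strong_induction_on with
  | _ k ih =>
    refine (integral_pow_succ_sub_eventuallyEq hN hprob hP).trans_isBigO ?_
    simp only [pow_two]
    refine (isBigO_refl (fun Δ : ℝ => Δ) _).mul (IsBigO.fun_sum fun m hm => ?_)
    have hmk : m < k := mem_range.1 hm
    have hmoment : (fun Δ => ∫ x, x ^ (k - m) ∂(P Δ)) =O[𝓝[>] 0] fun Δ : ℝ => Δ := by
      obtain ⟨j, hj⟩ : ∃ j, k - m = j + 1 := ⟨k - m - 1, by omega⟩
      have hrem := ih j (by omega) fun i hi => hN i (by omega)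
      have hsq : (fun Δ : ℝ => Δ ^ 2) =O[𝓝[>] 0] fun Δ => Δ :=
        (isLittleO_pow_id one_lt_two).isBigO.mono nhdsWithin_le_nhds
      have hmain : (fun Δ : ℝ => Δ * ∫ x, x ^ j * (x * N x)) =O[𝓝[>] 0] fun Δ => Δ := by
        simpa only [mul_comm] using
          (isBigO_refl (fun Δ : ℝ => Δ) (𝓝[>] 0)).const_mul_left (∫ x, x ^ j * (x * N x))
      simpa only [hj, sub_add_cancel] using (hrem.trans hsq).add hmain
    simpa only [mul_comm, mul_left_comm, mul_assoc] using
      hmoment.const_mul_left ((∫ x, x ^ m * (x * N x)) * k.choose m)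

lemma integrable_pow_mul_of_le {μ : Measure ℝ} {f : ℝ → ℝ} (hf : Integrable f μ) {n : ℕ}
    (hn : Integrable (fun x => |x| ^ n * |f x|) μ) {k : ℕ} (hk : k ≤ n) :
    Integrable (fun x => x ^ k * f x) μ := by
  refine (hf.norm.add hn).mono' ((by fun_prop : AEStronglyMeasurable (fun x : ℝ => x ^ k) μ).mul
    hf.1) (Eventually.of_forall fun x => ?_)
  have hpow : |x| ^ k ≤ 1 + |x| ^ n := by
    rcases le_total |x| 1 with hx | hx
    · exact (pow_le_one₀ (abs_nonneg x) hx).trans (le_add_of_nonneg_right (by positivity))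
    · exact (pow_le_pow_right₀ hx hk).trans (le_add_of_nonneg_left zero_le_one)
  calc ‖x ^ k * f x‖ = |x| ^ k * |f x| := by rw [norm_mul, norm_pow, norm_eq_abs, norm_eq_abs]
    _ ≤ (1 + |x| ^ n) * |f x| := by gcongr
    _ = |f x| + |x| ^ n * |f x| := by ring

lemma aemeasurable_id_mul_of_levy {μ : Measure ℝ} {N : ℝ → ℝ}
    (hN : AEMeasurable (fun x => min 1 |x| * N x) μ) : AEMeasurable (fun x => x * N x) μ := by
  refine ((by fun_prop : AEMeasurable (fun x : ℝ => x / min 1 |x|) μ).mul hN).congr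
    (Eventually.of_forall fun x => ?_)
  rcases eq_or_ne x 0 with rfl | hx
  · simp
  · have : min 1 |x| ≠ 0 := (lt_min one_pos (abs_pos.2 hx)).ne'
    simp only [Pi.mul_apply]
    field_simp

lemma integrable_id_mul_of_levy {μ : Measure ℝ} {N : ℝ → ℝ}
    (hN : Integrable (fun x => min 1 |x| * N x) μ) {n : ℕ}
    (hn : Integrable (fun x => |x| ^ n * |x * N x|) μ) : Integrable (fun x => x * N x) μ := by
  refine (hN.norm.add hn).mono' (aemeasurable_id_mul_of_levy hN.aemeasurable).aestronglyMeasurable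
    (Eventually.of_forall fun x => ?_)
  rw [Pi.add_apply, norm_eq_abs, norm_eq_abs]
  rcases le_total |x| 1 with hx | hx
  · rw [min_eq_right hx, abs_mul, abs_mul |x|, abs_abs]
    exact le_add_of_nonneg_right (by positivity)
  · exact (le_mul_of_one_le_left (abs_nonneg _) (one_le_pow₀ hx)).trans
      (le_add_of_nonneg_left (abs_nonneg _))

lemma nl1_nonneg (f : ℝ → ℝ) : 0 ≤ nl1 f :=
  integral_nonneg fun x => abs_nonneg (f x)

theorem increment_moments_general (N : ℝ → ℝ)
    (hNlevy : Integrable (fun x : ℝ => min 1 |x| * N x))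
    (g : ℝ → ℝ) (hg : ∀ x, g x = x * N x)
    (p : ℕ) (hp : 1 ≤ p) (hmom : Integrable (fun x : ℝ => |x| ^ (p - 1) * |g x|))
    (P : ℝ → Measure ℝ) (hprob : ∀ Δ : ℝ, 0 < Δ → IsProbabilityMeasure (P Δ))
    (hP : ∀ Δ : ℝ, 0 < Δ → IncrementLawN (P Δ) Δ N) :
    (∀ Δ : ℝ, 0 < Δ → Integrable (fun x : ℝ => |x| ^ p) (P Δ)) ∧
    ((fun Δ : ℝ => (∫ x : ℝ, x ^ p ∂(P Δ)) - Δ * ∫ x : ℝ, x ^ (p - 1) * g x)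
      =O[𝓝[>] (0 : ℝ)] fun Δ : ℝ => Δ ^ 2) ∧
    (∀ Δ : ℝ, 0 < Δ → (∫ x : ℝ, |x| ∂(P Δ)) ≤ Δ * nl1 g) := by
  obtain rfl : g = fun x => x * N x := funext hg
  obtain ⟨k, rfl⟩ := Nat.exists_eq_add_of_le' hp
  have hN := integrable_id_mul_of_levy hNlevy hmom
  have hpow (m : ℕ) (hm : m ≤ k) : Integrable fun x => x ^ m * (x * N x) :=
    integrable_pow_mul_of_le hN hmom hm
  refine ⟨fun Δ hΔ => ?_, isBigO_integral_pow_succ_sub hpow hprob hP, fun Δ hΔ => ?_⟩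
  · have := hprob Δ hΔ
    simpa only [norm_pow, norm_eq_abs] using
      ((hP Δ hΔ).integrable_pow fun m hm => hpow m (Nat.le_of_lt_succ hm)).norm
  · have := hprob Δ hΔ
    simpa only [abs_of_pos hΔ] using (hP Δ hΔ).integral_abs_le hN

/-- Proposition 6.2 (moments of the increments). -/
theorem increment_moments (N : ℝ → ℝ) (hN0 : ∀ x, 0 ≤ N x)
    (hNlevy : Integrable (fun x : ℝ => min 1 |x| * N x))
    (g : ℝ → ℝ) (hg : ∀ x, g x = x * N x)
    (p : ℕ) (hp : 1 ≤ p) (hmom : Integrable (fun x : ℝ => |x| ^ (p - 1) * |g x|))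
    (P : ℝ → Measure ℝ) (hprob : ∀ Δ : ℝ, 0 < Δ → IsProbabilityMeasure (P Δ))
    (hP : ∀ Δ : ℝ, 0 < Δ → IncrementLawN (P Δ) Δ N) :
    (∀ Δ : ℝ, 0 < Δ → Integrable (fun x : ℝ => |x| ^ p) (P Δ)) ∧
    ((fun Δ : ℝ => (∫ x : ℝ, x ^ p ∂(P Δ)) - Δ * ∫ x : ℝ, x ^ (p - 1) * g x)
      =o[𝓝[>] (0 : ℝ)] fun Δ : ℝ => Δ) ∧
    (Integrable g → ∀ Δ : ℝ, 0 < Δ → (∫ x : ℝ, |x| ∂(P Δ)) ≤ 2 * Δ * nl1 g) := by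
  obtain ⟨hint, hrem, habs⟩ := increment_moments_general N hNlevy g hg p hp hmom P hprob hP
  exact ⟨hint, hrem.trans_isLittleO ((isLittleO_pow_id one_lt_two).mono nhdsWithin_le_nhds),
    fun _ Δ hΔ => (habs Δ hΔ).trans (by nlinarith [nl1_nonneg g])⟩

end LevyAdapt
end
end
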